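/- arXiv:2404.15494 — 2 statements merged into one kernel-verified Lean document; each statement's English description precedes it below -/
import Mathlib

section
/- For every n ≥ 2, the orbit space C_n(ℂ)/(ℂ⋊ℂ*) is simply connected (it is path connected and its fundamental group is trivial). In the paper's notation, M_{0,n+1}/Σ_n is simply connected. -/
open Complex Topology

/-- Ordered configuration space of `n` points in the subset `X ⊆ ℂ`. -/
abbrev OrdConfig (n : ℕ) (X : Set ℂ) : Type :=
  {f : Fin n → ℂ // Function.Injective f ∧ ∀ i, f i ∈ X}

/-- Two ordered configurations are related if they differ by a permutation of labels. -/
def permRel (n : ℕ) (X : Set ℂ) (f g : OrdConfig n X) : Prop :=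
  ∃ σ : Equiv.Perm (Fin n), g.1 = f.1 ∘ σ

/-- The unordered configuration space `C_n(X)` with the quotient topology. -/
abbrev UConfig (n : ℕ) (X : Set ℂ) : Type := Quot (permRel n X)

/-- The affine group relation on unordered configurations: `d` is obtained from `c` by
applying `z ↦ b z + a` with `b ≠ 0` to every point. -/
def affRel (n : ℕ) (c d : UConfig n Set.univ) : Prop :=
  ∃ a b : ℂ, b ≠ 0 ∧ ∃ f g : OrdConfig n Set.univ,
    Quot.mk _ f = c ∧ Quot.mk _ g = d ∧ ∀ i, g.1 i = b * f.1 i + a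

/-- `C_n(ℂ)/(ℂ⋊ℂ*)`, the orbit space with the quotient topology. -/
abbrev ConfigModAff (n : ℕ) : Type := Quot (affRel n)

/-!
Translating the centre of mass to `0` and passing from a configuration to its monic polynomial
identifies `C_n(ℂ)/(ℂ⋊ℂ*)` with the quotient of the space `Z` of polynomials
`X ^ (m + 1) + a_(m-1) X ^ (m - 1) + ⋯ + a_0` without repeated roots, where `n = m + 1`, by the
action of `ℂ*` with weights `m + 1 - i` on the `a_i`. This action is not free, so covering theory
does not apply, but paths are controlled near each orbit because a neighbourhood contracts onto it.
Hence it is enough that loops in `Z` become null-homotopic in the quotient.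

Varying the constant coefficient fibres `Z` over the affine space of the other coefficients, with
fibres complements of finite sets of critical values, and a large constant coefficient gives a
section. So it is enough to treat loops in one fibre at a time. The finite set moves with the base
point, and triviality of the fibre loops is an open condition where the critical values stay
distinct and a closed condition everywhere. It therefore propagates along complex lines from the
single fibre `X ^ (m + 1) - X + c` to all fibres. On that fibre the map to the quotient only depends
on `c ^ m`, because of the scalings by `m`-th roots of unity; as a function of `c ^ m` it extends
over the family `X ^ (m + 1) - s X + c`, which at `s = 0` is a single orbit.
-/

open unitInterval Set Polynomial

section PiOneTrivial

variable {W X Y : Type*} [TopologicalSpace W] [TopologicalSpace X] [TopologicalSpace Y]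

/-- A map is `π₁`-trivial if parallel paths have homotopic images, that is, if it induces the
trivial homomorphism on all fundamental groups. -/
def IsPiOneTrivial (φ : C(X, Y)) : Prop :=
  ∀ ⦃x x' : X⦄ (p p' : Path x x'),
    (p.map φ.continuous).Homotopic (p'.map φ.continuous)

lemma IsPiOneTrivial.comp {φ : C(X, Y)} (hφ : IsPiOneTrivial φ) (g : C(W, X)) :
    IsPiOneTrivial (φ.comp g) :=
  fun _ _ p p' ↦ hφ (p.map g.continuous) (p'.map g.continuous)

lemma IsPiOneTrivial.of_simplyConnectedSpace [SimplyConnectedSpace X] (φ : C(X, Y)) :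
    IsPiOneTrivial φ :=
  fun _ _ p p' ↦ (SimplyConnectedSpace.paths_homotopic p p').map φ

lemma IsPiOneTrivial.const (y : Y) : IsPiOneTrivial (ContinuousMap.const X y) :=
  fun _ _ p p' ↦ by
    have map_const : p.map (ContinuousMap.const X y).continuous =
        p'.map (ContinuousMap.const X y).continuous := Path.ext rfl
    rw [map_const]

lemma pathClass_trans_left_cancel {a b c : X} (γ : Path.Homotopic.Quotient a b)
    {δ δ' : Path.Homotopic.Quotient b c} (h : γ.trans δ = γ.trans δ') : δ = δ' := by
  have h' := congrArg γ.symm.trans h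
  simpa only [← Path.Homotopic.Quotient.trans_assoc, Path.Homotopic.Quotient.symm_trans,
    Path.Homotopic.Quotient.refl_trans] using h'

lemma pathClass_trans_right_cancel {a b c : X} {γ γ' : Path.Homotopic.Quotient a b}
    (δ : Path.Homotopic.Quotient b c) (h : γ.trans δ = γ'.trans δ) : γ = γ' := by
  have h' := congrArg (fun ε ↦ ε.trans δ.symm) h
  simpa only [Path.Homotopic.Quotient.trans_assoc, Path.Homotopic.Quotient.trans_symm,
    Path.Homotopic.Quotient.trans_refl] using h'

lemma pathClass_map_trans (φ : C(X, Y)) {a b c : X} (γ : Path.Homotopic.Quotient a b)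
    (δ : Path.Homotopic.Quotient b c) : (γ.trans δ).map φ = (γ.map φ).trans (δ.map φ) := by
  obtain ⟨p, rfl⟩ := Path.Homotopic.Quotient.mk_surjective γ
  obtain ⟨p', rfl⟩ := Path.Homotopic.Quotient.mk_surjective δ
  exact congrArg Path.Homotopic.Quotient.mk (Path.map_trans p p' φ.continuous)

lemma pathClass_map_trans_evalAt {φ ψ : C(X, Y)} (H : φ.Homotopy ψ) {x x' : X} (p : Path x x') :
    (Path.Homotopic.Quotient.mk (p.map φ.continuous)).trans (.mk (H.evalAt x')) =
      (Path.Homotopic.Quotient.mk (H.evalAt x)).trans (.mk (p.map ψ.continuous)) :=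
  Path.Homotopic.Quotient.eq.2 (.map_trans_evalAt H p)

lemma pathClass_map_trans_evalAt_const {φ : C(X, Y)} {y : Y} (H : φ.Homotopy (.const X y))
    {x x' : X} (p : Path x x') :
    (Path.Homotopic.Quotient.mk (p.map φ.continuous)).trans (.mk (H.evalAt x' : Path (φ x') y)) =
      .mk (H.evalAt x : Path (φ x) y) :=
  (pathClass_map_trans_evalAt H p).trans (Path.Homotopic.Quotient.trans_refl _)

/-- A path with values in a subset, as a path of that subset. -/
def pathInSubtype {S : Set X} {a b : X} (p : Path a b) (hp : ∀ t, p t ∈ S) :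
    Path (⟨a, p.source ▸ hp 0⟩ : S) ⟨b, p.target ▸ hp 1⟩ where
  toFun t := ⟨p t, hp t⟩
  continuous_toFun := p.continuous.subtype_mk hp
  source' := Subtype.ext p.source
  target' := Subtype.ext p.target

lemma IsPiOneTrivial.of_homotopic {φ ψ : C(X, Y)} (hφ : IsPiOneTrivial φ)
    (H : φ.Homotopic ψ) : IsPiOneTrivial ψ := by
  intro x x' p p'
  obtain ⟨H⟩ := H
  refine Path.Homotopic.Quotient.eq.1 (pathClass_trans_left_cancel (.mk (H.evalAt x)) ?_)
  rw [← pathClass_map_trans_evalAt, ← pathClass_map_trans_evalAt,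
    Path.Homotopic.Quotient.eq.2 (hφ p p')]

lemma pathClass_induction_of_local
    {P : ∀ {x x' : X}, Path.Homotopic.Quotient x x' → Prop}
    (trans : ∀ {a b c : X} {γ : Path.Homotopic.Quotient a b} {δ : Path.Homotopic.Quotient b c},
      P γ → P δ → P (γ.trans δ))
    (small : ∀ x₀ : X, ∃ N ∈ 𝓝 x₀, ∀ {a b : X} (p : Path a b), range p ⊆ N → P (.mk p))
    {x x' : X} (γ : Path.Homotopic.Quotient x x') : P γ := by
  obtain ⟨p, rfl⟩ := Path.Homotopic.Quotient.mk_surjective γ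
  choose N hN hsmall using small
  obtain ⟨t, ht0, tmono, ⟨n, htn⟩, tcover⟩ :=
    exists_monotone_Icc_subset_open_cover_unitInterval
      (c := fun x₀ ↦ p ⁻¹' interior (N x₀))
      (fun x₀ ↦ isOpen_interior.preimage p.continuous)
      (fun s _ ↦ mem_iUnion.2 ⟨p s, mem_interior_iff_mem_nhds.2 (hN (p s))⟩)
  have piece : ∀ k, P (.mk (p.subpath (t k) (t (k + 1)))) := by
    intro k
    obtain ⟨x₀, hx₀⟩ := tcover k
    refine hsmall x₀ _ ?_
    rw [Path.range_subpath_of_le _ _ _ (tmono k.le_succ)]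
    exact (image_subset_iff.2 hx₀).trans interior_subset
  have initial : ∀ k, P (.mk (p.subpath (t 0) (t (k + 1)))) := by
    intro k
    induction k with
    | zero => exact piece 0
    | succ k ih =>
      have key := trans ih (piece (k + 1))
      rwa [← Path.Homotopic.Quotient.mk_trans, Path.Homotopic.Quotient.eq.2
        ⟨Path.Homotopy.subpathTransSubpath p _ _ _⟩] at key
  have whole := initial n
  rw [ht0, htn (n + 1) n.le_succ] at whole
  rw [Path.subpath_zero_one] at whole
  have uncast : ∀ {a b : X} (ha : a = x) (hb : b = x'), P (.mk (p.cast ha hb)) → P (.mk p) := by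
    rintro a b rfl rfl h
    exact h
  exact uncast p.source p.target whole

/-- Naturality of `η : φ ⇒ ψ` on the fundamental groupoid may be checked on small paths; it then
transfers `π₁`-triviality from `ψ` to `φ`. -/
theorem IsPiOneTrivial.of_locally_natural {φ ψ : C(X, Y)} (hψ : IsPiOneTrivial ψ)
    (η : ∀ x, Path.Homotopic.Quotient (φ x) (ψ x))
    (hη : ∀ x₀, ∃ N ∈ 𝓝 x₀, ∀ {a b : X} (p : Path a b), range p ⊆ N →
      (Path.Homotopic.Quotient.mk (p.map φ.continuous)).trans (η b) =
        (η a).trans (.mk (p.map ψ.continuous))) :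
    IsPiOneTrivial φ := by
  have natural : ∀ {a b : X} (γ : Path.Homotopic.Quotient a b),
      (γ.map φ).trans (η b) = (η a).trans (γ.map ψ) := by
    intro a b γ
    refine pathClass_induction_of_local
      (P := fun {a b} γ ↦ (γ.map φ).trans (η b) = (η a).trans (γ.map ψ)) ?_ hη γ
    intro a b c γ δ hγ hδ
    rw [pathClass_map_trans, pathClass_map_trans, Path.Homotopic.Quotient.trans_assoc,
      hδ, ← Path.Homotopic.Quotient.trans_assoc, hγ, Path.Homotopic.Quotient.trans_assoc]
  intro x x' p p'
  refine Path.Homotopic.Quotient.eq.1 (pathClass_trans_right_cancel (η x') ?_)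
  calc (Path.Homotopic.Quotient.mk (p.map φ.continuous)).trans (η x')
      = (η x).trans (.mk (p.map ψ.continuous)) := natural (.mk p)
    _ = (η x).trans (.mk (p'.map ψ.continuous)) := by rw [Path.Homotopic.Quotient.eq.2 (hψ p p')]
    _ = (Path.Homotopic.Quotient.mk (p'.map φ.continuous)).trans (η x') := (natural (.mk p')).symm

theorem IsPiOneTrivial.of_locally_homotopic {φ ψ : C(X, Y)} (hψ : IsPiOneTrivial ψ)
    (η : ∀ x, Path.Homotopic.Quotient (φ x) (ψ x))
    (hη : ∀ x₀, ∃ N ∈ 𝓝 x₀, ∃ H : (φ.restrict N).Homotopy (ψ.restrict N),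
      ∀ x : N, η x = .mk (H.evalAt x)) :
    IsPiOneTrivial φ := by
  refine hψ.of_locally_natural η fun x₀ ↦ ?_
  obtain ⟨N, hN, H, hH⟩ := hη x₀
  refine ⟨N, hN, fun {a b} p hp ↦ ?_⟩
  let p' := pathInSubtype p fun t ↦ hp (mem_range_self t)
  calc (Path.Homotopic.Quotient.mk (p.map φ.continuous)).trans (η b)
      = .trans (.mk (p'.map (φ.restrict N).continuous)) (.mk (H.evalAt ⟨b, _⟩)) :=
        congrArg _ (hH ⟨b, _⟩)
    _ = .trans (.mk (H.evalAt ⟨a, _⟩)) (.mk (p'.map (ψ.restrict N).continuous)) :=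
        pathClass_map_trans_evalAt H p'
    _ = (η a).trans (.mk (p.map ψ.continuous)) :=
        congrArg (Path.Homotopic.Quotient.trans · _) (hH ⟨a, _⟩).symm

end PiOneTrivial

section Descent

variable {X Y : Type*} [TopologicalSpace X] [TopologicalSpace Y]

/-- The path `α` is the image under `q` of a path of the source. -/
def HasPathLift (q : C(X, Y)) {y y' : Y} (α : Path y y') : Prop :=
  ∃ (x x' : X) (p : Path x x'), ∀ t, q (p t) = α t

/-- Any two points in the same fibre of `q` are joined by a path inside that fibre. -/
def HasJoinedFibers (q : C(X, Y)) : Prop :=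
  ∀ x x' : X, q x = q x' → ∃ f : Path x x', ∀ t, q (f t) = q x

lemma trans_trans_homotopic_of_const {y y₁ y₂ y' : Y} {β₁ : Path y y₁} {β₂ : Path y₁ y₂}
    {β₃ : Path y₂ y'} {α : Path y y'} (h₁ : ∀ t, β₁ t = y) (h₂ : ∀ t, β₂ t = α t)
    (h₃ : ∀ t, β₃ t = y') : ((β₁.trans β₂).trans β₃).Homotopic α := by
  obtain rfl : y₁ = y := by simpa using h₁ 1
  obtain rfl : y₂ = y' := by simpa using h₃ 0
  obtain rfl : β₁ = Path.refl _ := Path.ext (funext h₁)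
  obtain rfl : β₂ = α := Path.ext (funext h₂)
  obtain rfl : β₃ = Path.refl _ := Path.ext (funext h₃)
  exact Path.Homotopic.trans ⟨.transRefl _⟩ ⟨.reflTrans _⟩

variable {q : C(X, Y)}

lemma HasJoinedFibers.exists_path_map_homotopic (hq : HasJoinedFibers q) {x x' : X}
    {α : Path (q x) (q x')} (hα : HasPathLift q α) :
    ∃ p : Path x x', (p.map q.continuous).Homotopic α := by
  obtain ⟨a, b, p, hp⟩ := hα
  obtain ⟨f, hf⟩ := hq x a (by simpa using (hp 0).symm)
  have hb : q b = q x' := by simpa using hp 1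
  obtain ⟨g, hg⟩ := hq b x' hb
  refine ⟨(f.trans p).trans g, ?_⟩
  rw [Path.map_trans, Path.map_trans]
  exact trans_trans_homotopic_of_const hf hp fun t ↦ (hg t).trans hb

lemma HasJoinedFibers.homotopic (hq : HasJoinedFibers q) (hπ : IsPiOneTrivial q) {y y' : Y}
    {α α' : Path y y'} (hα : HasPathLift q α) (hα' : HasPathLift q α') : α.Homotopic α' := by
  have ⟨x, x', p₀, hp₀⟩ := hα
  obtain rfl : q x = y := by simpa using hp₀ 0
  obtain rfl : q x' = y' := by simpa using hp₀ 1
  obtain ⟨p, hp⟩ := hq.exists_path_map_homotopic hα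
  obtain ⟨p', hp'⟩ := hq.exists_path_map_homotopic hα'
  exact (hp.symm.trans (hπ p p')).trans hp'

lemma HasPathLift.map {x x' : X} (p : Path x x') : HasPathLift q (p.map q.continuous) :=
  ⟨x, x', p, fun _ ↦ rfl⟩

lemma HasJoinedFibers.exists_hasPathLift_homotopic_trans (hq : HasJoinedFibers q)
    (hsurj : Function.Surjective q) {y y' y'' : Y} {α : Path y y'} {β : Path y' y''}
    (hα : HasPathLift q α) (hβ : HasPathLift q β) :
    ∃ γ : Path y y'', HasPathLift q γ ∧ γ.Homotopic (α.trans β) := by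
  obtain ⟨x, rfl⟩ := hsurj y
  obtain ⟨x', rfl⟩ := hsurj y'
  obtain ⟨x'', rfl⟩ := hsurj y''
  obtain ⟨p, hp⟩ := hq.exists_path_map_homotopic hα
  obtain ⟨p', hp'⟩ := hq.exists_path_map_homotopic hβ
  refine ⟨(p.trans p').map q.continuous, .map _, ?_⟩
  rw [Path.map_trans]
  exact hp.hcomp hp'

/-- Near `y` the space contracts to `y` along tracks that lift through `q`. -/
def HasLiftableContractionAt (q : C(X, Y)) (y : Y) : Prop :=
  ∃ U ∈ 𝓝 y, ∃ H : (⟨Subtype.val, continuous_subtype_val⟩ : C(U, Y)).Homotopy (.const U y),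
    ∀ u, HasPathLift q (H.evalAt u)

-- The lifted paths to a base point have a well-defined class, and these classes trivialise every
-- small path by naturality of the contraction.
theorem simplyConnectedSpace_of_isPiOneTrivial [PathConnectedSpace X]
    (hsurj : Function.Surjective q) (hπ : IsPiOneTrivial q) (hq : HasJoinedFibers q)
    (hloc : ∀ y, HasLiftableContractionAt q y) : SimplyConnectedSpace Y := by
  have : PathConnectedSpace Y := hsurj.pathConnectedSpace q.continuous
  let x₀ : X := Classical.arbitrary X
  have lift_exists : ∀ y, ∃ α : Path y (q x₀), HasPathLift q α := by
    intro y
    obtain ⟨x, rfl⟩ := hsurj y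
    exact ⟨_, .map (PathConnectedSpace.somePath x x₀)⟩
  choose α hα using lift_exists
  suffices IsPiOneTrivial (ContinuousMap.id Y) from
    simply_connected_iff_paths_homotopic'.2 ⟨inferInstance, fun p p' ↦ this p p'⟩
  refine (IsPiOneTrivial.const (X := Y) (q x₀)).of_locally_natural (fun y ↦ .mk (α y)) fun y ↦ ?_
  obtain ⟨U, hU, H, hH⟩ := hloc y
  refine ⟨U, hU, fun {a b} p hp ↦ ?_⟩
  have factor (u : U) : Path.Homotopic.Quotient.mk (α u) =
      .trans (.mk (H.evalAt u)) (.mk (α y)) := by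
    obtain ⟨γ, hγ, hγα⟩ := hq.exists_hasPathLift_homotopic_trans hsurj (hH u) (hα y)
    exact Path.Homotopic.Quotient.eq.2 ((hq.homotopic hπ (hα u) hγ).trans hγα)
  let p' := pathInSubtype p fun t ↦ hp (mem_range_self t)
  calc (Path.Homotopic.Quotient.mk (p'.map continuous_subtype_val)).trans (.mk (α b))
      = .trans (.mk (p'.map continuous_subtype_val))
          (.trans (.mk (H.evalAt ⟨b, hp p.target_mem_range⟩)) (.mk (α y))) :=
        congrArg _ (factor ⟨b, _⟩)
    _ = .trans (.mk (H.evalAt ⟨a, hp p.source_mem_range⟩)) (.mk (α y)) :=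
        (Path.Homotopic.Quotient.trans_assoc _ _ _).symm.trans
          (congrArg (Path.Homotopic.Quotient.trans · _) (pathClass_map_trans_evalAt_const H p'))
    _ = .mk (α a) := (factor ⟨a, _⟩).symm
    _ = (Path.Homotopic.Quotient.mk (α a)).trans (.refl (q x₀)) :=
        (Path.Homotopic.Quotient.trans_refl _).symm

end Descent

section Families

variable {B F Y : Type*} [TopologicalSpace B] [TopologicalSpace F] [TopologicalSpace Y]
  {E : Set (B × F)}

/-- The restriction of a map on a family `E ⊆ B × F` to its fibre over `b`. -/
def fiberMap (Ψ : C(E, Y)) (b : B) : C(Prod.mk b ⁻¹' E, Y) where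
  toFun c := Ψ ⟨(b, c), c.2⟩
  continuous_toFun := Ψ.continuous.comp (by fun_prop)

lemma fiberMap_comp_homotopic (Ψ : C(E, Y)) {K : Type*} [TopologicalSpace K] {b b' : B}
    {f : C(K, Prod.mk b ⁻¹' E)} {f' : C(K, Prod.mk b' ⁻¹' E)} (γ : C(I × K, E))
    (h₀ : ∀ k, (γ (0, k) : B × F) = (b, (f k : F)))
    (h₁ : ∀ k, (γ (1, k) : B × F) = (b', (f' k : F))) :
    ((fiberMap Ψ b).comp f).Homotopic ((fiberMap Ψ b').comp f') :=
  ⟨{ toContinuousMap := Ψ.comp γ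
     map_zero_left k := congrArg Ψ (Subtype.ext (h₀ k))
     map_one_left k := congrArg Ψ (Subtype.ext (h₁ k)) }⟩

lemma exists_pathConnected_prod_subset [LocallyPathConnectedSpace B] (hE : IsOpen E) {b : B}
    {K : Set F} (hK : IsCompact K) (hbK : K ⊆ Prod.mk b ⁻¹' E) :
    ∃ V ∈ 𝓝 b, IsPathConnected V ∧ V ×ˢ K ⊆ E := by
  obtain ⟨U, W, hU, -, hbU, hKW, hUW⟩ := generalized_tube_lemma isCompact_singleton hK hE
    (by rintro ⟨s, c⟩ ⟨rfl, hc⟩; exact hbK hc)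
  obtain ⟨V, ⟨hV, hVconn⟩, hVU⟩ :=
    (path_connected_basis b).mem_iff.1 (hU.mem_nhds (hbU rfl))
  exact ⟨V, hV, hVconn, (prod_mono hVU hKW).trans hUW⟩

theorem isClosed_setOf_isPiOneTrivial_fiberMap [LocallyPathConnectedSpace B] (hE : IsOpen E)
    (Ψ : C(E, Y)) : IsClosed {b | IsPiOneTrivial (fiberMap Ψ b)} := by
  refine isClosed_of_closure_subset fun b hb x x' p p' ↦ ?_
  let K : Set (Prod.mk b ⁻¹' E) := range p ∪ range p'
  have hK : IsCompact (Subtype.val '' K) :=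
    ((isCompact_range p.continuous).union (isCompact_range p'.continuous)).image
      continuous_subtype_val
  obtain ⟨V, hV, hVconn, hVK⟩ := exists_pathConnected_prod_subset hE hK
    (by rintro _ ⟨c, -, rfl⟩; exact c.2)
  obtain ⟨s, hsV, hs⟩ := mem_closure_iff_nhds.1 hb V hV
  obtain ⟨γ, hγ⟩ := hVconn.joinedIn s hsV b (mem_of_mem_nhds hV)
  let slide : C(I × K, E) := ⟨fun z ↦ ⟨(γ z.1, z.2), hVK ⟨hγ z.1, z.2, z.2.2, rfl⟩⟩, by fun_prop⟩
  let f : C(K, Prod.mk s ⁻¹' E) := ⟨fun k ↦ ⟨k.1, hVK ⟨hsV, k, k.2, rfl⟩⟩, by fun_prop⟩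
  have key : IsPiOneTrivial ((fiberMap Ψ b).comp ⟨Subtype.val, continuous_subtype_val⟩) :=
    (hs.comp f).of_homotopic
      (fiberMap_comp_homotopic Ψ slide (fun k ↦ by simp [slide, f]) (fun k ↦ by simp [slide]))
  exact key (pathInSubtype p fun t ↦ .inl ⟨t, rfl⟩) (pathInSubtype p' fun t ↦ .inr ⟨t, rfl⟩)

end Families

section PointPush

variable {ι F : Type*} [Fintype ι] [NormedAddCommGroup F] [NormedSpace ℝ F]

/-- The map of `F` moving each point `a j` by `d j`, damped linearly to the identity at distance
`R` from `a j`. -/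
noncomputable def pointPush (a : ι → F) (R : ℝ) (d : ι → F) (c : F) : F :=
  c + ∑ j, max 0 (1 - ‖c - a j‖ / R) • d j

lemma pointPush_zero (a : ι → F) (R : ℝ) (c : F) : pointPush a R 0 c = c := by
  simp [pointPush]

lemma pointPush_apply_self {a : ι → F} {R : ℝ} (hR : 0 < R)
    (hsep : Pairwise fun j k ↦ R ≤ ‖a k - a j‖) (d : ι → F) (k : ι) :
    pointPush a R d (a k) = a k + d k := by
  classical
  have hother : ∀ j ≠ k, max 0 (1 - ‖a k - a j‖ / R) • d j = 0 := fun j hj ↦ by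
    rw [max_eq_left (sub_nonpos.2 ((one_le_div hR).2 (hsep hj))), zero_smul]
  rw [pointPush, Finset.sum_eq_single k (fun j _ ↦ hother j) (by simp)]
  simp

lemma continuous_pointPush (a : ι → F) (R : ℝ) :
    Continuous fun z : (ι → F) × F ↦ pointPush a R z.1 z.2 := by
  unfold pointPush
  fun_prop

omit [NormedSpace ℝ F] in
lemma lipschitz_damping (a : F) {R : ℝ} (hR : 0 < R) (c c' : F) :
    |max 0 (1 - ‖c - a‖ / R) - max 0 (1 - ‖c' - a‖ / R)| ≤ ‖c - c'‖ / R := by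
  calc |max 0 (1 - ‖c - a‖ / R) - max 0 (1 - ‖c' - a‖ / R)|
      ≤ |(1 - ‖c - a‖ / R) - (1 - ‖c' - a‖ / R)| := by
        rw [max_comm 0, max_comm 0]
        exact abs_max_sub_max_le_abs _ _ 0
    _ = |‖c' - a‖ - ‖c - a‖| / R := by
        rw [← abs_of_pos hR, ← abs_div, abs_of_pos hR]
        ring_nf
    _ ≤ ‖c - c'‖ / R := by
        gcongr
        simpa [norm_sub_rev] using abs_norm_sub_norm_le (c' - a) (c - a)

lemma norm_pointPush_sub_sub_le (a : ι → F) {R : ℝ} (hR : 0 < R) (d : ι → F) (c c' : F) :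
    ‖pointPush a R d c - pointPush a R d c' - (c - c')‖ ≤ (∑ j, ‖d j‖) / R * ‖c - c'‖ := by
  calc ‖pointPush a R d c - pointPush a R d c' - (c - c')‖
      = ‖∑ j, (max 0 (1 - ‖c - a j‖ / R) - max 0 (1 - ‖c' - a j‖ / R)) • d j‖ := by
        simp only [pointPush, sub_smul, Finset.sum_sub_distrib]
        congr 1
        abel
    _ ≤ ∑ j, ‖c - c'‖ / R * ‖d j‖ := by
        refine norm_sum_le_of_le _ fun j _ ↦ ?_
        rw [norm_smul]
        gcongr
        exact lipschitz_damping (a j) hR c c'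
    _ = (∑ j, ‖d j‖) / R * ‖c - c'‖ := by
        rw [← Finset.mul_sum]
        ring

lemma exists_homeomorph_eq_pointPush [CompleteSpace F] (a : ι → F) {R : ℝ} (d : ι → F)
    (hd : ∑ j, ‖d j‖ < R) : ∃ h : F ≃ₜ F, ∀ c, h c = pointPush a R d c := by
  have hR : 0 < R := (Finset.sum_nonneg fun j _ ↦ norm_nonneg (d j)).trans_lt hd
  let κ : NNReal := ⟨(∑ j, ‖d j‖) / R, by positivity⟩
  have approx : ApproximatesLinearOn (pointPush a R d)
      (ContinuousLinearEquiv.refl ℝ F : F →L[ℝ] F) univ κ :=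
    fun c _ c' _ ↦ norm_pointPush_sub_sub_le a hR d c c'
  have hκ : κ < 1 := (div_lt_one hR).2 hd
  refine ⟨approx.toHomeomorph _ ?_, fun c ↦ rfl⟩
  rcases subsingleton_or_nontrivial F with hF | hF
  · exact .inl hF
  · right
    simpa using hκ

end PointPush

section PuncturedFamilies

variable {B ι F Y : Type*} [TopologicalSpace B] [Finite ι] [NormedAddCommGroup F]
  [TopologicalSpace Y] {v : B → ι → F}

/-- The family over `B` whose fibre over `s` is the complement of the points `v s j`. -/
def avoidFamily (v : B → ι → F) : Set (B × F) :=
  {z | ∀ j, z.2 ≠ v z.1 j}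

lemma isOpen_avoidFamily (hv : Continuous v) : IsOpen (avoidFamily v) := by
  simp only [avoidFamily, ofPred_forall]
  exact isOpen_iInter_of_finite fun j ↦ isOpen_ne_fun continuous_snd (by fun_prop)

lemma exists_pos_forall_le_norm_sub {a : ι → F} (ha : Function.Injective a) :
    ∃ R > 0, Pairwise fun j k ↦ R ≤ ‖a k - a j‖ := by
  have small : ∀ᶠ R : ℝ in 𝓝[>] 0, ∀ j k, j ≠ k → R ≤ ‖a k - a j‖ := by
    refine Filter.eventually_all.2 fun j ↦ Filter.eventually_all.2 fun k ↦ ?_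
    by_cases hjk : j = k
    · simp [hjk]
    · have hpos : 0 < ‖a k - a j‖ := norm_pos_iff.2 (sub_ne_zero.2 fun h ↦ hjk (ha h.symm))
      filter_upwards [mem_nhdsWithin_of_mem_nhds (Iic_mem_nhds hpos)] with R hR _ using hR
  obtain ⟨R, hR, hR0⟩ := (small.and self_mem_nhdsWithin).exists
  exact ⟨R, hR0, hR⟩

variable [NormedSpace ℝ F] [CompleteSpace F] [LocallyPathConnectedSpace B]

omit [Finite ι] [TopologicalSpace B] [LocallyPathConnectedSpace B] in
lemma exists_homeomorph_avoidFamily_fiber [Fintype ι] {s₀ s : B} {R : ℝ}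
    (hsep : Pairwise fun j k ↦ R ≤ ‖v s₀ k - v s₀ j‖) (hs : ∑ j, ‖v s j - v s₀ j‖ < R) :
    ∃ h : F ≃ₜ F, (∀ c, h c = pointPush (v s₀) R (v s - v s₀) c) ∧
      ∀ c, (s₀, c) ∈ avoidFamily v ↔ (s, h c) ∈ avoidFamily v := by
  have hR : 0 < R := (Finset.sum_nonneg fun j _ ↦ norm_nonneg _).trans_lt hs
  obtain ⟨h, hh⟩ := exists_homeomorph_eq_pointPush (v s₀) (v s - v s₀) hs
  have push : ∀ j, h (v s₀ j) = v s j := fun j ↦ by simp [hh, pointPush_apply_self hR hsep]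
  exact ⟨h, hh, fun c ↦ forall_congr' fun j ↦ by simp [← push]⟩

-- Pushing the points `v s₀ j` to `v s j` identifies nearby fibres, compatibly with `Ψ` up to
-- homotopy.
lemma eventually_isPiOneTrivial_fiberMap_avoidFamily (hv : Continuous v) (Ψ : C(avoidFamily v, Y))
    {s₀ : B} (hinj : Function.Injective (v s₀)) (htriv : IsPiOneTrivial (fiberMap Ψ s₀)) :
    ∀ᶠ s in 𝓝 s₀, IsPiOneTrivial (fiberMap Ψ s) := by
  have := Fintype.ofFinite ι
  obtain ⟨R, hR, hsep⟩ := exists_pos_forall_le_norm_sub hinj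
  have close : ∀ᶠ s in 𝓝 s₀, ∑ j, ‖v s j - v s₀ j‖ < R :=
    ContinuousAt.eventually_lt (f := fun s ↦ ∑ j, ‖v s j - v s₀ j‖) (by fun_prop)
      continuousAt_const (by simpa using hR)
  obtain ⟨V, ⟨hV, hVconn⟩, hVclose⟩ := (path_connected_basis s₀).mem_iff.1 close
  filter_upwards [hV] with s hs
  obtain ⟨h, hh, hmem⟩ := exists_homeomorph_avoidFamily_fiber hsep (hVclose hs)
  let hfib : Prod.mk s₀ ⁻¹' avoidFamily v ≃ₜ Prod.mk s ⁻¹' avoidFamily v := h.subtype hmem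
  obtain ⟨γ, hγ⟩ := hVconn.joinedIn s₀ (mem_of_mem_nhds hV) s hs
  have stay (z : I × Prod.mk s₀ ⁻¹' avoidFamily v) :
      (γ z.1, pointPush (v s₀) R (v (γ z.1) - v s₀) z.2) ∈ avoidFamily v := by
    obtain ⟨h', hh', hmem'⟩ := exists_homeomorph_avoidFamily_fiber hsep (hVclose (hγ z.1))
    exact hh' z.2 ▸ (hmem' z.2).1 z.2.2
  let slide : C(I × Prod.mk s₀ ⁻¹' avoidFamily v, avoidFamily v) :=
    ⟨fun z ↦ ⟨_, stay z⟩, .subtype_mk (.prodMk (by fun_prop)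
      ((continuous_pointPush (v s₀) R).comp (.prodMk (by fun_prop) (by fun_prop)))) stay⟩
  have pushed : IsPiOneTrivial ((fiberMap Ψ s).comp hfib) :=
    IsPiOneTrivial.of_homotopic (φ := (fiberMap Ψ s₀).comp (.id _)) htriv
      (fiberMap_comp_homotopic Ψ slide (fun c ↦ by simp [slide, pointPush_zero])
        (fun c ↦ by simp [slide, hfib, hh]))
  let unpush : C(Prod.mk s ⁻¹' avoidFamily v, Prod.mk s₀ ⁻¹' avoidFamily v) := hfib.symm
  have push_unpush : ((fiberMap Ψ s).comp hfib).comp unpush = fiberMap Ψ s := by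
    ext c
    simp [unpush]
  exact push_unpush ▸ pushed.comp unpush

theorem isPiOneTrivial_fiberMap_of_eq_avoidFamily (hv : Continuous v) {E : Set (B × F)}
    (hE : E = avoidFamily v) (Ψ : C(E, Y)) {G : Set B} (hG : IsPreconnected G)
    (hinj : ∀ s ∈ G, Function.Injective (v s)) {s₀ : B} (hs₀ : s₀ ∈ G)
    (htriv : IsPiOneTrivial (fiberMap Ψ s₀)) {s : B} (hs : s ∈ closure G) :
    IsPiOneTrivial (fiberMap Ψ s) := by
  subst hE
  let T : Set B := {s | IsPiOneTrivial (fiberMap Ψ s)}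
  have hT : IsClosed T := isClosed_setOf_isPiOneTrivial_fiberMap (isOpen_avoidFamily hv) Ψ
  have hGT : G ⊆ interior T := by
    refine hG.subset_left_of_subset_union isOpen_interior hT.isOpen_compl
      (disjoint_compl_right.mono_left interior_subset) (fun s hs ↦ ?_) ⟨s₀, hs₀, ?_⟩
    · by_cases hsT : s ∈ T
      · exact .inl (mem_interior_iff_mem_nhds.2
          (eventually_isPiOneTrivial_fiberMap_avoidFamily hv Ψ (hinj s hs) hsT))
      · exact .inr hsT
    · exact mem_interior_iff_mem_nhds.2
        (eventually_isPiOneTrivial_fiberMap_avoidFamily hv Ψ (hinj s₀ hs₀) htriv)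
  exact closure_minimal (hGT.trans interior_subset) hT hs

end PuncturedFamilies

section Section

variable {B F Y : Type*} [TopologicalSpace B] [TopologicalSpace F] [TopologicalSpace Y]
  {E : Set (B × F)}

lemma pathConnectedSpace_of_section [PathConnectedSpace B]
    (hfib : ∀ b, IsPathConnected (Prod.mk b ⁻¹' E)) {τ : B → F} (hτ : Continuous τ)
    (hτE : ∀ b, (b, τ b) ∈ E) : PathConnectedSpace E := by
  let graph : B → E := fun b ↦ ⟨(b, τ b), hτE b⟩
  have hgraph : Continuous graph := by fun_prop
  have to_graph (z : E) : Joined z (graph z.1.1) := by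
    have := isPathConnected_iff_pathConnectedSpace.1 (hfib z.1.1)
    exact (PathConnectedSpace.joined (⟨z.1.2, z.2⟩ : Prod.mk z.1.1 ⁻¹' E) ⟨τ z.1.1, hτE _⟩).map
      (f := fun c : Prod.mk z.1.1 ⁻¹' E ↦ (⟨(z.1.1, c), c.2⟩ : E)) (by fun_prop)
  obtain ⟨b⟩ := (inferInstance : Nonempty B)
  refine ⟨⟨graph b⟩, fun z z' ↦ (to_graph z).trans (.trans ?_ (to_graph z').symm)⟩
  exact (PathConnectedSpace.joined z.1.1 z'.1.1).map hgraph

variable [AddCommGroup F] [IsTopologicalAddGroup F] [Module ℝ F] [ContinuousSMul ℝ F]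

-- Every point is moved to the section inside its fibre; the class of this motion is unambiguous,
-- and near a given point it can be chosen continuously by translating one path.
theorem isPiOneTrivial_of_section [SimplyConnectedSpace B] (hE : IsOpen E) (Ψ : C(E, Y))
    (hfib : ∀ b, IsPathConnected (Prod.mk b ⁻¹' E)) (htriv : ∀ b, IsPiOneTrivial (fiberMap Ψ b))
    {τ : B → F} (hτ : Continuous τ) (hτE : ∀ b, (b, τ b) ∈ E) : IsPiOneTrivial Ψ := by
  let graph : C(B, E) := ⟨fun b ↦ ⟨(b, τ b), hτE b⟩, by fun_prop⟩
  let base : C(E, B) := ⟨fun z ↦ z.1.1, by fun_prop⟩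
  have := fun b ↦ isPathConnected_iff_pathConnectedSpace.1 (hfib b)
  let vertical (z : E) : Path (⟨z.1.2, z.2⟩ : Prod.mk z.1.1 ⁻¹' E) ⟨τ z.1.1, hτE _⟩ :=
    PathConnectedSpace.somePath _ _
  refine ((IsPiOneTrivial.of_simplyConnectedSpace (Ψ.comp graph)).comp base).of_locally_homotopic
    (fun z ↦ .mk ((vertical z).map (fiberMap Ψ z.1.1).continuous)) fun z₀ ↦ ?_
  let slide (z : E × I) : B × F := (z.1.1.1, vertical z₀ z.2 +
    ((1 - (z.2 : ℝ)) • (z.1.1.2 - z₀.1.2) + (z.2 : ℝ) • (τ z.1.1.1 - τ z₀.1.1)))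
  have hslide : Continuous slide := by fun_prop
  have near : ∀ᶠ z in 𝓝 z₀, ∀ u ∈ univ, slide (z, u) ∈ E := by
    refine isCompact_univ.eventually_forall_of_forall_eventually fun u _ ↦ ?_
    refine hslide.continuousAt.eventually (hE.mem_nhds ?_)
    have hvert : (z₀.1.1, (vertical z₀ u : F)) ∈ E := (vertical z₀ u).2
    simpa [slide] using hvert
  let N : Set E := {z | ∀ u ∈ univ, slide (z, u) ∈ E}
  let H : (Ψ.restrict N).Homotopy (((Ψ.comp graph).comp base).restrict N) :=
    { toFun w := Ψ ⟨slide (w.2, w.1), w.2.2 w.1 trivial⟩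
      continuous_toFun := by fun_prop
      map_zero_left z := by simp [slide]
      map_one_left z := by simp [slide, graph, base] }
  let moved (z : N) : Path (⟨z.1.1.2, z.1.2⟩ : Prod.mk z.1.1.1 ⁻¹' E) ⟨τ z.1.1.1, hτE _⟩ :=
    { toFun u := ⟨(slide (z, u)).2, z.2 u trivial⟩
      continuous_toFun := by fun_prop
      source' := by simp [slide]
      target' := by simp [slide] }
  exact ⟨N, near, H, fun z ↦ Path.Homotopic.Quotient.eq.2 (htriv _ (vertical z) (moved z))⟩

end Section

section LocalContraction

variable {X Y : Type*} [TopologicalSpace X] [TopologicalSpace Y] {q : C(X, Y)}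

lemma hasLiftableContractionAt_of_isOpenQuotientMap (hq : IsOpenQuotientMap q) {U : Set Y}
    {y : Y} (hU : U ∈ 𝓝 y) (h : C(I × (q ⁻¹' U), X)) (h_zero : ∀ x, q (h (0, x)) = q x)
    (h_one : ∀ x, q (h (1, x)) = y)
    (h_compat : ∀ s (x x' : q ⁻¹' U), q x = q x' → q (h (s, x)) = q (h (s, x'))) :
    HasLiftableContractionAt q y := by
  let f : C(I × (q ⁻¹' U), I × U) :=
    (ContinuousMap.id I).prodMap ⟨U.restrictPreimage q, (hq.restrictPreimage U).continuous⟩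
  have hf : IsQuotientMap f := (IsOpenQuotientMap.id.prodMap (hq.restrictPreimage U)).isQuotientMap
  have hfactor : ∀ z z', f z = f z' → q.comp h z = q.comp h z' := by
    rintro ⟨s, x⟩ ⟨s', x'⟩ hzz'
    obtain ⟨rfl, hxx'⟩ := Prod.mk.inj hzz'
    exact h_compat s x x' (congrArg Subtype.val hxx')
  let H : C(I × U, Y) := hf.lift (q.comp h) hfactor
  have H_apply (s : I) (x : q ⁻¹' U) : H (s, ⟨q x, x.2⟩) = q (h (s, x)) :=
    congrFun (congrArg DFunLike.coe (hf.lift_comp (q.comp h) hfactor)) (s, x)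
  have exists_preimage (u : U) : ∃ x : q ⁻¹' U, ⟨q x, x.2⟩ = u :=
    (hq.restrictPreimage U).surjective u
  refine ⟨U, hU, ⟨H, fun u ↦ ?_, fun u ↦ ?_⟩, fun u ↦ ?_⟩ <;> obtain ⟨x, rfl⟩ := exists_preimage u
  · exact (H_apply 0 x).trans (h_zero x)
  · exact (H_apply 1 x).trans (h_one x)
  · exact ⟨_, _, ⟨h.comp ((ContinuousMap.id I).prodMk (.const I x)), rfl, rfl⟩,
      fun s ↦ (H_apply s x).symm⟩

end LocalContraction

section WeightedAction

variable {ι : Type*} {d : ι → ℕ}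

/-- The action of the scalar `l` on `ι → ℂ` with weights `d`. -/
def weightedAct (d : ι → ℕ) (l : ℂ) (a : ι → ℂ) : ι → ℂ := fun i ↦ l ^ d i * a i

lemma weightedAct_one (a : ι → ℂ) : weightedAct d 1 a = a := by
  funext i
  simp [weightedAct]

lemma weightedAct_weightedAct (l l' : ℂ) (a : ι → ℂ) :
    weightedAct d l (weightedAct d l' a) = weightedAct d (l * l') a := by
  funext i
  simp [weightedAct, mul_pow, mul_assoc]

/-- The orbit of `a` under the action with weights `d`. -/
def weightedOrbit (d : ι → ℕ) (a : ι → ℂ) : Set (ι → ℂ) :=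
  {b | ∃ l ≠ 0, b = weightedAct d l a}

lemma self_mem_weightedOrbit (a : ι → ℂ) : a ∈ weightedOrbit d a :=
  ⟨1, one_ne_zero, (weightedAct_one a).symm⟩

lemma weightedOrbit_weightedAct {l : ℂ} (hl : l ≠ 0) (a : ι → ℂ) :
    weightedOrbit d (weightedAct d l a) = weightedOrbit d a := by
  ext b
  constructor
  · rintro ⟨l', hl', rfl⟩
    exact ⟨l' * l, mul_ne_zero hl' hl, weightedAct_weightedAct ..⟩
  · rintro ⟨l', hl', rfl⟩
    exact ⟨l' / l, div_ne_zero hl' hl, by rw [weightedAct_weightedAct, div_mul_cancel₀ _ hl]⟩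

lemma weightedAct_lineMap (l : ℂ) (a b : ι → ℂ) (s : ℝ) :
    weightedAct d l (AffineMap.lineMap a b s) =
      AffineMap.lineMap (weightedAct d l a) (weightedAct d l b) s := by
  funext i
  simp only [weightedAct, AffineMap.lineMap_apply_module, Pi.add_apply, Pi.smul_apply, real_smul]
  ring

/-- `q` is the quotient map of an invariant set `Z` by the weighted action of the nonzero
scalars. -/
structure IsWeightedOrbitMap {Y : Type*} [TopologicalSpace Y] (d : ι → ℕ) {Z : Set (ι → ℂ)}
    (q : C(Z, Y)) : Prop where
  weightedAct_mem : ∀ ⦃a⦄, a ∈ Z → ∀ l ≠ 0, weightedAct d l a ∈ Z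
  isOpenQuotientMap : IsOpenQuotientMap q
  apply_eq_iff : ∀ a b : Z, q a = q b ↔ ∃ l ≠ 0, b.1 = weightedAct d l a

lemma IsWeightedOrbitMap.hasJoinedFibers {Y : Type*} [TopologicalSpace Y] {Z : Set (ι → ℂ)}
    {q : C(Z, Y)} (hq : IsWeightedOrbitMap d q) : HasJoinedFibers q := by
  intro x x' hxx'
  obtain ⟨l, hl, hx'⟩ := (hq.apply_eq_iff x x').1 hxx'
  have hjoined : JoinedIn {0}ᶜ (1 : ℂ) l :=
    (isPathConnected_compl_singleton_of_one_lt_rank (by simp) 0).joinedIn 1 (by simp) l hl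
  obtain ⟨γ, hγ⟩ := hjoined
  refine ⟨⟨⟨fun t ↦ ⟨weightedAct d (γ t) x, hq.weightedAct_mem x.2 _ (hγ t)⟩, ?_⟩, ?_, ?_⟩, ?_⟩
  · unfold weightedAct
    fun_prop
  · simp [weightedAct_one]
  · simp [← hx']
  · exact fun t ↦ ((hq.apply_eq_iff x _).2 ⟨γ t, hγ t, rfl⟩).symm

end WeightedAction

section Retraction

variable {ι : Type*} {d : ι → ℕ} {s : Finset ι} {c : ι → ℤ}

/-- The Laurent monomial with exponents `c i`, `i ∈ s`. -/
noncomputable def laurentMonomial (s : Finset ι) (c : ι → ℤ) (b : ι → ℂ) : ℂ := ∏ i ∈ s, b i ^ c i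

lemma laurentMonomial_ne_zero {b : ι → ℂ} (hb : ∀ i ∈ s, b i ≠ 0) : laurentMonomial s c b ≠ 0 :=
  Finset.prod_ne_zero_iff.2 fun i hi ↦ zpow_ne_zero _ (hb i hi)

lemma prod_zpow_eq_zpow_sum {l : ℂ} (hl : l ≠ 0) (s : Finset ι) (e : ι → ℤ) :
    ∏ i ∈ s, l ^ e i = l ^ ∑ i ∈ s, e i := by
  induction s using Finset.cons_induction with
  | empty => simp
  | cons i s hi ih => rw [Finset.prod_cons, Finset.sum_cons, ih, zpow_add₀ hl]

lemma laurentMonomial_weightedAct {l : ℂ} (hl : l ≠ 0) (b : ι → ℂ) :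
    laurentMonomial s c (weightedAct d l b) =
      l ^ (∑ i ∈ s, d i * c i) * laurentMonomial s c b := by
  simp only [laurentMonomial, weightedAct, ← prod_zpow_eq_zpow_sum hl, ← Finset.prod_mul_distrib,
    mul_zpow, zpow_mul, zpow_natCast]

lemma continuousAt_laurentMonomial {b : ι → ℂ} (hb : ∀ i ∈ s, b i ≠ 0) :
    ContinuousAt (laurentMonomial s c) b :=
  tendsto_finsetProd _ fun i hi ↦ (continuous_apply i).continuousAt.zpow₀ (c i) (.inl (hb i hi))

lemma exists_zpow_eq {D : ℤ} (hD : D ≠ 0) {u : ℂ} (hu : u ≠ 0) : ∃ l ≠ 0, l ^ D = u := by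
  refine ⟨exp (log u / D), exp_ne_zero _, ?_⟩
  rw [← exp_int_mul, mul_div_cancel₀ _ (by exact_mod_cast hD), exp_log hu]

lemma exists_bezout_quotients (hs : s.Nonempty) (hd : ∀ i, d i ≠ 0) :
    ∃ (D : ℤ) (c k : ι → ℤ), D ≠ 0 ∧ ∑ i ∈ s, d i * c i = D ∧ ∀ i ∈ s, (d i : ℤ) = D * k i := by
  obtain ⟨c, hc⟩ := s.gcd_eq_sum_mul fun i ↦ (d i : ℤ)
  have exists_quotient (i) : ∃ k : ℤ, i ∈ s → (d i : ℤ) = (s.gcd fun i ↦ (d i : ℤ)) * k := by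
    by_cases hi : i ∈ s
    · obtain ⟨k, hk⟩ := Finset.gcd_dvd (f := fun i ↦ (d i : ℤ)) hi
      exact ⟨k, fun _ ↦ hk⟩
    · exact ⟨0, fun h ↦ (hi h).elim⟩
  choose k hk using exists_quotient
  refine ⟨_, c, k, fun h ↦ ?_, hc.symm, hk⟩
  obtain ⟨i, hi⟩ := hs
  exact hd i (by simpa using Finset.gcd_eq_zero_iff.1 h i hi)

-- A Laurent monomial in the nonzero coordinates of `a` has weight the gcd `D` of their weights.
-- Its value at `b` determines the scalar carrying `a` to the retraction of `b` up to a `D`-th root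
-- of unity, and these roots of unity fix `a`.
lemma exists_equivariant_retraction [Finite ι] (hd : ∀ i, d i ≠ 0) {a : ι → ℂ} (ha : a ≠ 0) :
    ∃ ρ : (ι → ℂ) → ι → ℂ, ρ a = a ∧
      (∀ b, (∀ i, a i ≠ 0 → b i ≠ 0) → ContinuousAt ρ b ∧ ∃ l ≠ 0, ρ b = weightedAct d l a) ∧
      ∀ l ≠ 0, ∀ b, ρ (weightedAct d l b) = weightedAct d l (ρ b) := by
  classical
  have := Fintype.ofFinite ι
  let s : Finset ι := {i | a i ≠ 0}
  have mem_s {i} : i ∈ s ↔ a i ≠ 0 := by simp [s]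
  obtain ⟨D, c, k, hD, hc, hk⟩ :=
    exists_bezout_quotients ((Function.ne_iff.1 ha).imp fun i ↦ mem_s.2) hd
  have pow_eq (l : ℂ) {i} (hi : a i ≠ 0) : l ^ d i = (l ^ D) ^ k i := by
    rw [← zpow_mul, ← hk i (mem_s.2 hi), zpow_natCast]
  let ratio (b : ι → ℂ) : ℂ := laurentMonomial s c b / laurentMonomial s c a
  have ratio_ne_zero {b} (hb : ∀ i, a i ≠ 0 → b i ≠ 0) : ratio b ≠ 0 :=
    div_ne_zero (laurentMonomial_ne_zero fun i hi ↦ hb i (mem_s.1 hi))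
      (laurentMonomial_ne_zero fun i ↦ mem_s.1)
  have ratio_act {l : ℂ} (hl : l ≠ 0) (b) : ratio (weightedAct d l b) = l ^ D * ratio b := by
    simp only [ratio, laurentMonomial_weightedAct hl, hc, mul_div_assoc]
  refine ⟨fun b i ↦ ratio b ^ k i * a i, ?_, fun b hb ↦ ⟨?_, ?_⟩, fun l hl b ↦ funext fun i ↦ ?_⟩
  · simp [ratio, div_self (laurentMonomial_ne_zero fun _ ↦ mem_s.1)]
  · have hratio : ContinuousAt ratio b :=
      (continuousAt_laurentMonomial fun i hi ↦ hb i (mem_s.1 hi)).div_const _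
    exact continuousAt_pi.2 fun i ↦
      (hratio.zpow₀ (k i) (.inl (ratio_ne_zero hb))).mul continuousAt_const
  · obtain ⟨l, hl, hlD⟩ := exists_zpow_eq hD (ratio_ne_zero hb)
    refine ⟨l, hl, funext fun i ↦ ?_⟩
    by_cases hi : a i = 0
    · simp [weightedAct, hi]
    · rw [weightedAct, pow_eq l hi, hlD]
  · by_cases hi : a i = 0
    · simp [weightedAct, hi]
    · simp only [ratio_act hl, weightedAct, pow_eq l hi, mul_zpow, mul_assoc]

lemma isOpen_setOf_forall_lineMap_mem [Finite ι] {a : ι → ℂ} {ρ : (ι → ℂ) → ι → ℂ}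
    (hρ : ∀ b, (∀ i, a i ≠ 0 → b i ≠ 0) → ContinuousAt ρ b) {Z : Set (ι → ℂ)} (hZ : IsOpen Z) :
    IsOpen {b | (∀ i, a i ≠ 0 → b i ≠ 0) ∧
      ∀ s : I, (AffineMap.lineMap b (ρ b) (s : ℝ) : ι → ℂ) ∈ Z} := by
  refine isOpen_iff_mem_nhds.2 fun b ⟨hb, hbZ⟩ ↦ ?_
  have eventually_ne : ∀ᶠ b' in 𝓝 b, ∀ i, a i ≠ 0 → b' i ≠ 0 :=
    Filter.eventually_all.2 fun i ↦ Filter.eventually_imp_distrib_left.2 fun hi ↦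
      (continuous_apply i).continuousAt.eventually_ne (hb i hi)
  have eventually_mem : ∀ᶠ b' in 𝓝 b, ∀ s ∈ (univ : Set I),
      (AffineMap.lineMap b' (ρ b') (s : ℝ) : ι → ℂ) ∈ Z := by
    refine isCompact_univ.eventually_forall_of_forall_eventually fun s _ ↦ ?_
    have hline : ContinuousAt
        (fun z : (ι → ℂ) × I ↦ (AffineMap.lineMap z.1 (ρ z.1) (z.2 : ℝ) : ι → ℂ)) (b, s) :=
      .lineMap continuousAt_fst ((hρ b hb).comp (f := Prod.fst) continuousAt_fst) (by fun_prop)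
    exact hline.eventually (hZ.mem_nhds (hbZ s))
  filter_upwards [eventually_ne, eventually_mem] with b' hb' hb'Z
  exact ⟨hb', fun s ↦ hb'Z s trivial⟩

-- A neighbourhood of an orbit is pushed along straight segments onto the orbit.
lemma IsWeightedOrbitMap.hasLiftableContractionAt [Finite ι] {Y : Type*} [TopologicalSpace Y]
    {Z : Set (ι → ℂ)} {q : C(Z, Y)} (hq : IsWeightedOrbitMap d q) (hd : ∀ i, d i ≠ 0)
    (hZ : IsOpen Z) (hZ₀ : 0 ∉ Z) (y : Y) : HasLiftableContractionAt q y := by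
  obtain ⟨a, rfl⟩ := hq.isOpenQuotientMap.surjective y
  obtain ⟨ρ, hρa, hρ, hρ_act⟩ := exists_equivariant_retraction hd (ne_of_mem_of_not_mem a.2 hZ₀)
  let W : Set (ι → ℂ) := {b | (∀ i, a.1 i ≠ 0 → b i ≠ 0) ∧
    ∀ s : I, (AffineMap.lineMap b (ρ b) (s : ℝ) : ι → ℂ) ∈ Z}
  have hW : IsOpen W := isOpen_setOf_forall_lineMap_mem (fun b hb ↦ (hρ b hb).1) hZ
  have lineMap_act {l : ℂ} (hl : l ≠ 0) (b : ι → ℂ) (s : ℝ) :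
      AffineMap.lineMap (weightedAct d l b) (ρ (weightedAct d l b)) s =
        weightedAct d l (AffineMap.lineMap b (ρ b) s) := by
    rw [hρ_act l hl, weightedAct_lineMap]
  let U : Set Y := q '' (Subtype.val ⁻¹' W)
  have haU : U ∈ 𝓝 (q a) :=
    (hq.isOpenQuotientMap.isOpenMap _ (hW.preimage continuous_subtype_val)).mem_nhds
      ⟨a, ⟨fun _ h ↦ h, fun s ↦ by simp [hρa]⟩, rfl⟩
  have mem_W (b : q ⁻¹' U) : b.1.1 ∈ W := by
    obtain ⟨b', hb', hbb'⟩ := b.2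
    obtain ⟨l, hl, hb⟩ := (hq.apply_eq_iff b' b).1 hbb'
    rw [hb]
    refine ⟨fun i hi ↦ mul_ne_zero (pow_ne_zero _ hl) (hb'.1 i hi), fun s ↦ ?_⟩
    rw [lineMap_act hl]
    exact hq.weightedAct_mem (hb'.2 s) l hl
  let h : C(I × (q ⁻¹' U), Z) :=
    ⟨fun z ↦ ⟨AffineMap.lineMap z.2.1.1 (ρ z.2.1) (z.1 : ℝ), (mem_W z.2).2 z.1⟩, by
      have hρ_cont : Continuous fun b : q ⁻¹' U ↦ ρ b.1 := continuous_iff_continuousAt.2 fun b ↦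
        (hρ _ (mem_W b).1).1.comp (f := fun b : q ⁻¹' U ↦ b.1.1) (by fun_prop)
      exact .subtype_mk (.lineMap (by fun_prop) (hρ_cont.comp continuous_snd) (by fun_prop)) _⟩
  refine hasLiftableContractionAt_of_isOpenQuotientMap hq.isOpenQuotientMap haU h
    (fun b ↦ ?_) (fun b ↦ ?_) fun s b b' hbb' ↦ ?_
  · simp [h]
  · obtain ⟨l, hl, hb⟩ := (hρ _ (mem_W b).1).2
    exact ((hq.apply_eq_iff _ _).2 ⟨l, hl, by simpa [h] using hb⟩).symm
  · obtain ⟨l, hl, hb⟩ := (hq.apply_eq_iff _ _).1 hbb'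
    exact (hq.apply_eq_iff _ _).2 ⟨l, hl, by simp [h, hb, lineMap_act hl]⟩

end Retraction

section RootPoly

variable {R S : Type*} [CommRing R] [CommRing S] {n : ℕ}

/-- The monic polynomial whose roots, with multiplicity, are the values of `f`. -/
noncomputable def rootPoly (f : Fin n → R) : R[X] := ∏ i, (X - C (f i))

lemma monic_rootPoly (f : Fin n → R) : (rootPoly f).Monic := monic_prod_X_sub_C _ _

lemma natDegree_rootPoly [Nontrivial R] (f : Fin n → R) : (rootPoly f).natDegree = n := by
  simp [rootPoly]

lemma coeff_rootPoly_self [Nontrivial R] (f : Fin n → R) : (rootPoly f).coeff n = 1 := by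
  simpa [leadingCoeff, natDegree_rootPoly] using (monic_rootPoly f).leadingCoeff

lemma coeff_rootPoly_pred (hn : 0 < n) (f : Fin n → R) :
    (rootPoly f).coeff (n - 1) = -∑ i, f i := by
  simpa [rootPoly] using
    prod_X_sub_C_coeff_card_pred (Finset.univ : Finset (Fin n)) f (by simpa using hn)

lemma map_rootPoly (φ : R →+* S) (f : Fin n → R) : (rootPoly f).map φ = rootPoly (φ ∘ f) := by
  simp [rootPoly, Polynomial.map_prod]

lemma rootPoly_comp_perm (f : Fin n → R) (e : Equiv.Perm (Fin n)) :
    rootPoly (f ∘ e) = rootPoly f :=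
  Equiv.prod_comp e fun i ↦ X - C (f i)

lemma eval_rootPoly_eq_zero_iff [IsDomain R] {f : Fin n → R} {z : R} :
    (rootPoly f).eval z = 0 ↔ ∃ i, f i = z := by
  simp [rootPoly, eval_prod, Finset.prod_eq_zero_iff, sub_eq_zero, @eq_comm _ z]

lemma rootPoly_const_mul [IsDomain R] (l : R) (f : Fin n → R) :
    rootPoly (fun i ↦ l * f i) = (rootPoly f).scaleRoots l := by
  simp only [rootPoly]
  induction (Finset.univ : Finset (Fin n)) using Finset.cons_induction with
  | empty => simp
  | cons i s hi ih =>
    rw [Finset.prod_cons, Finset.prod_cons, mul_scaleRoots_of_noZeroDivisors, X_sub_C_scaleRoots,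
      ih, mul_comm l]

lemma exists_perm_of_rootPoly_eq [IsDomain R] {f g : Fin n → R} (hg : Function.Injective g)
    (h : rootPoly f = rootPoly g) : ∃ e : Equiv.Perm (Fin n), g = f ∘ e := by
  have exists_index (i) : ∃ j, f j = g i := by
    rw [← eval_rootPoly_eq_zero_iff, h, eval_rootPoly_eq_zero_iff]
    exact ⟨i, rfl⟩
  choose e he using exists_index
  have he_inj : Function.Injective e := fun i j hij ↦ hg (by rw [← he, ← he, hij])
  exact ⟨.ofBijective e he_inj.bijective_of_finite, funext fun i ↦ (he i).symm⟩

lemma exists_rootPoly_eq {K : Type*} [Field K] [IsAlgClosed K] {p : K[X]} (hp : p.Monic)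
    (hn : p.natDegree = n) : ∃ f : Fin n → K, rootPoly f = p := by
  have hsplits := IsAlgClosed.splits p
  obtain rfl : p.roots.toList.length = n := by
    rw [Multiset.length_toList, ← hsplits.natDegree_eq_card_roots, hn]
  refine ⟨fun i ↦ p.roots.toList[i.1], ?_⟩
  have hprod := Fin.prod_univ_fun_getElem p.roots.toList fun z ↦ X - C z
  rw [rootPoly, hprod, ← Multiset.prod_coe, ← Multiset.map_coe, Multiset.coe_toList,
    ← hsplits.eq_prod_roots_of_monic hp]

lemma continuous_coeff_rootPoly [TopologicalSpace R] [IsTopologicalRing R] (k : ℕ) :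
    Continuous fun f : Fin n → R ↦ (rootPoly f).coeff k := by
  have heval : ∀ f : Fin n → R, MvPolynomial.eval f
      ((rootPoly (MvPolynomial.X : Fin n → MvPolynomial (Fin n) R)).coeff k) =
      (rootPoly f).coeff k := fun f ↦ by
    rw [← coeff_map, map_rootPoly]
    congr 2
    funext i
    simp
  exact (MvPolynomial.continuous_eval _).congr heval

lemma norm_le_norm_coeff_rootPoly_add_one (f : Fin n → ℂ) :
    ‖f‖ ≤ ‖fun k : Fin n ↦ (rootPoly f).coeff k‖ + 1 := by
  refine (pi_norm_le_iff_of_nonneg (by positivity)).2 fun j ↦ ?_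
  have hroot : (rootPoly f).IsRoot (f j) := eval_rootPoly_eq_zero_iff.2 ⟨j, rfl⟩
  have hcauchy : cauchyBound (rootPoly f) ≤ ‖fun k : Fin n ↦ (rootPoly f).coeff k‖₊ + 1 := by
    rw [cauchyBound, monic_rootPoly f, natDegree_rootPoly, nnnorm_one, div_one]
    gcongr
    exact Finset.sup_le fun k hk ↦
      nnnorm_le_pi_nnnorm (fun k : Fin n ↦ (rootPoly f).coeff k) ⟨k, Finset.mem_range.1 hk⟩
  exact_mod_cast (hroot.norm_lt_cauchyBound (monic_rootPoly f).ne_zero).le.trans hcauchy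

-- The Cauchy bound on the roots makes the coefficient map proper.
lemma isClosedMap_coeff_rootPoly :
    IsClosedMap fun (f : Fin n → ℂ) (k : Fin n) ↦ (rootPoly f).coeff k := by
  have hcont : Continuous fun (f : Fin n → ℂ) (k : Fin n) ↦ (rootPoly f).coeff k :=
    continuous_pi fun k ↦ continuous_coeff_rootPoly k
  refine (isProperMap_iff_isCompact_preimage.2 ⟨hcont, fun K hK ↦ ?_⟩).isClosedMap
  refine Metric.isCompact_of_isClosed_isBounded (hK.isClosed.preimage hcont) ?_
  obtain ⟨r, hr⟩ := hK.isBounded.exists_norm_le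
  refine isBounded_iff_forall_norm_le.2 ⟨r + 1, fun f hf ↦ ?_⟩
  exact (norm_le_norm_coeff_rootPoly_add_one f).trans (by gcongr; exact hr _ hf)

end RootPoly

section DepressedPoly

variable {R : Type*} [CommRing R] {m : ℕ}

/-- The monic polynomial `X ^ (m + 1) + ∑ i < m, a i X ^ i` of degree `m + 1`. Its coefficient in
degree `m` is zero, which means that its roots add up to zero. -/
noncomputable def depressedPoly (a : Fin m → R) : R[X] := X ^ (m + 1) + ∑ i, C (a i) * X ^ (i : ℕ)

lemma eval_depressedPoly (a : Fin m → R) (z : R) :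
    (depressedPoly a).eval z = z ^ (m + 1) + ∑ i, a i * z ^ (i : ℕ) := by
  simp [depressedPoly, eval_finsetSum]

lemma eval_derivative_depressedPoly (a : Fin m → R) (z : R) :
    (derivative (depressedPoly a)).eval z =
      (m + 1) * z ^ m + ∑ i : Fin m, a i * (i : ℕ) * z ^ ((i : ℕ) - 1) := by
  simp [depressedPoly, eval_finsetSum, mul_assoc, derivative_X_pow]

lemma depressedPoly_add_single (a : Fin m → R) (i : Fin m) (c : R) :
    depressedPoly (a + Pi.single i c) = depressedPoly a + C c * X ^ (i : ℕ) := by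
  simp [depressedPoly, add_mul, Finset.sum_add_distrib, add_assoc, Pi.single_apply, apply_ite C]

lemma coeff_depressedPoly (a : Fin m → R) (k : ℕ) : (depressedPoly a).coeff k =
    (if k = m + 1 then 1 else 0) + if h : k < m then a ⟨k, h⟩ else 0 := by
  rw [depressedPoly, coeff_add, coeff_X_pow, finsetSum_coeff]
  congr 1
  simp only [coeff_C_mul, coeff_X_pow, mul_ite, mul_one, mul_zero]
  split_ifs with h
  · rw [Finset.sum_eq_single ⟨k, h⟩ (fun i _ hi ↦ if_neg fun hk ↦ hi (Fin.ext hk.symm)) (by simp),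
      if_pos rfl]
  · exact Finset.sum_eq_zero fun i _ ↦ if_neg (by omega)

lemma coeff_depressedPoly_fin (a : Fin m → R) (i : Fin m) : (depressedPoly a).coeff i = a i := by
  simp [coeff_depressedPoly, show (i : ℕ) ≠ m + 1 by omega]

lemma coeff_depressedPoly_self (a : Fin m → R) : (depressedPoly a).coeff m = 0 := by
  simp [coeff_depressedPoly]

lemma coeff_depressedPoly_succ (a : Fin m → R) : (depressedPoly a).coeff (m + 1) = 1 := by
  simp [coeff_depressedPoly]

lemma depressedPoly_injective : Function.Injective (depressedPoly : (Fin m → R) → R[X]) :=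
  fun a b h ↦ funext fun i ↦ by rw [← coeff_depressedPoly_fin a, h, coeff_depressedPoly_fin]

lemma continuous_coeff_depressedPoly [TopologicalSpace R] [IsTopologicalRing R] (k : ℕ) :
    Continuous fun a : Fin m → R ↦ (depressedPoly a).coeff k := by
  simp only [coeff_depressedPoly]
  split_ifs <;> fun_prop

lemma natDegree_depressedPoly [Nontrivial R] (a : Fin m → R) :
    (depressedPoly a).natDegree = m + 1 := by
  refine le_antisymm (natDegree_le_iff_coeff_eq_zero.2 fun k hk ↦ ?_)
    (le_natDegree_of_ne_zero (by simp [coeff_depressedPoly_succ]))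
  rw [coeff_depressedPoly, if_neg (by omega), dif_neg (by omega), add_zero]

lemma monic_depressedPoly [Nontrivial R] (a : Fin m → R) : (depressedPoly a).Monic := by
  rw [Monic, leadingCoeff, natDegree_depressedPoly, coeff_depressedPoly_succ]

lemma depressedPoly_coeff {p : R[X]} (hdeg : p.natDegree ≤ m + 1) (hmonic : p.coeff (m + 1) = 1)
    (hpred : p.coeff m = 0) : depressedPoly (fun i : Fin m ↦ p.coeff i) = p := by
  ext k
  rw [coeff_depressedPoly]
  rcases lt_or_ge k m with hk | hk
  · simp [hk, show k ≠ m + 1 by omega]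
  · rcases (show k = m ∨ k = m + 1 ∨ m + 1 < k by omega) with rfl | rfl | hk'
    · simp [hpred]
    · simp [hmonic]
    · simp [coeff_eq_zero_of_natDegree_lt (hdeg.trans_lt hk'), show k ≠ m + 1 by omega,
        show ¬ k < m by omega]

lemma exists_rootPoly_eq_depressedPoly {K : Type*} [Field K] [IsAlgClosed K] (a : Fin m → K) :
    ∃ f : Fin (m + 1) → K, rootPoly f = depressedPoly a :=
  exists_rootPoly_eq (monic_depressedPoly a) (natDegree_depressedPoly a)

lemma rootPoly_eq_depressedPoly_iff [Nontrivial R] {f : Fin (m + 1) → R} {a : Fin m → R} :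
    rootPoly f = depressedPoly a ↔
      ∀ k : Fin (m + 1), (rootPoly f).coeff k = (depressedPoly a).coeff k := by
  refine ⟨fun h k ↦ by rw [h], fun h ↦ (ext_iff_natDegree_le (natDegree_rootPoly f).le
    (natDegree_depressedPoly a).le).2 fun k hk ↦ ?_⟩
  rcases hk.lt_or_eq with hk | rfl
  · exact h ⟨k, hk⟩
  · rw [coeff_rootPoly_self, coeff_depressedPoly_succ]

lemma sum_eq_zero_of_rootPoly_eq_depressedPoly {f : Fin (m + 1) → R} {a : Fin m → R}
    (h : rootPoly f = depressedPoly a) : ∑ i, f i = 0 := by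
  have hpred := coeff_rootPoly_pred (Nat.succ_pos m) f
  rw [h, Nat.succ_sub_one, coeff_depressedPoly_self] at hpred
  exact neg_eq_zero.1 hpred.symm

lemma isClosed_setOf_exists_rootPoly_eq {F : Set (Fin (m + 1) → ℂ)} (hF : IsClosed F) :
    IsClosed {a : Fin m → ℂ | ∃ f ∈ F, rootPoly f = depressedPoly a} := by
  have hcont : Continuous fun (a : Fin m → ℂ) (k : Fin (m + 1)) ↦ (depressedPoly a).coeff k :=
    continuous_pi fun k ↦ continuous_coeff_depressedPoly k
  convert (isClosedMap_coeff_rootPoly F hF).preimage hcont using 1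
  ext a
  simp only [rootPoly_eq_depressedPoly_iff, mem_ofPred_eq, mem_preimage, mem_image, funext_iff]

/-- The weights of the coefficients of `depressedPoly a` when the roots have weight one. -/
def coeffWeight (m : ℕ) (i : Fin m) : ℕ := m + 1 - i

lemma coeffWeight_ne_zero (i : Fin m) : coeffWeight m i ≠ 0 := by
  rw [coeffWeight]
  omega

lemma depressedPoly_weightedAct (l : ℂ) (a : Fin m → ℂ) :
    depressedPoly (weightedAct (coeffWeight m) l a) = (depressedPoly a).scaleRoots l := by
  ext k
  rw [coeff_scaleRoots, natDegree_depressedPoly, coeff_depressedPoly, coeff_depressedPoly]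
  by_cases hk : k = m + 1
  · simp [hk]
  · by_cases hkm : k < m <;> simp [hk, hkm, weightedAct, coeffWeight, mul_comm]

end DepressedPoly

section SepCoeffs

variable {m : ℕ}

/-- The parameters `a` for which `depressedPoly a` has no repeated root. -/
def sepCoeffs (m : ℕ) : Set (Fin m → ℂ) := {a | (depressedPoly a).Separable}

lemma mem_sepCoeffs_iff {a : Fin m → ℂ} : a ∈ sepCoeffs m ↔
    ∀ z, (derivative (depressedPoly a)).eval z = 0 → (depressedPoly a).eval z ≠ 0 := by
  change IsCoprime _ _ ↔ _
  rw [isCoprime_iff_aeval_ne_zero_of_isAlgClosed ℂ ℂ]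
  simp only [coe_aeval_eq_eval]
  exact forall_congr' fun z ↦ by tauto

lemma mem_sepCoeffs_iff_injective {a : Fin m → ℂ} {f : Fin (m + 1) → ℂ}
    (h : rootPoly f = depressedPoly a) : a ∈ sepCoeffs m ↔ Function.Injective f := by
  change (depressedPoly a).Separable ↔ _
  rw [← h]
  exact separable_prod_X_sub_C_iff

lemma weightedAct_mem_sepCoeffs {a : Fin m → ℂ} (ha : a ∈ sepCoeffs m) {l : ℂ} (hl : l ≠ 0) :
    weightedAct (coeffWeight m) l a ∈ sepCoeffs m := by
  obtain ⟨f, hf⟩ := exists_rootPoly_eq_depressedPoly a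
  have hlf : rootPoly (fun i ↦ l * f i) = depressedPoly (weightedAct (coeffWeight m) l a) := by
    rw [rootPoly_const_mul, depressedPoly_weightedAct, hf]
  exact (mem_sepCoeffs_iff_injective hlf).2
    ((mul_right_injective₀ hl).comp ((mem_sepCoeffs_iff_injective hf).1 ha))

lemma isClosed_setOf_not_injective {ι X : Type*} [Finite ι] [TopologicalSpace X] [T2Space X] :
    IsClosed {f : ι → X | ¬Function.Injective f} := by
  have hunion : {f : ι → X | ¬Function.Injective f} =
      ⋃ (i) (j) (_ : i ≠ j), {f | f i = f j} := by
    ext f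
    simp [Function.Injective, and_comm]
  rw [hunion]
  exact isClosed_iUnion_of_finite fun i ↦ isClosed_iUnion_of_finite fun j ↦
    isClosed_iUnion_of_finite fun _ ↦ isClosed_eq (continuous_apply i) (continuous_apply j)

lemma isOpen_sepCoeffs : IsOpen (sepCoeffs m) := by
  rw [← isClosed_compl_iff]
  convert isClosed_setOf_exists_rootPoly_eq (isClosed_setOf_not_injective (ι := Fin (m + 1)))
    using 1
  ext a
  constructor
  · intro ha
    obtain ⟨f, hf⟩ := exists_rootPoly_eq_depressedPoly a
    exact ⟨f, fun h ↦ ha ((mem_sepCoeffs_iff_injective hf).2 h), hf⟩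
  · rintro ⟨f, hf, hfa⟩ ha
    exact hf ((mem_sepCoeffs_iff_injective hfa).1 ha)

lemma zero_notMem_sepCoeffs [NeZero m] : (0 : Fin m → ℂ) ∉ sepCoeffs m := fun h ↦
  mem_sepCoeffs_iff.1 h 0 (by simp [eval_derivative_depressedPoly, NeZero.ne m])
    (by simp [eval_depressedPoly])

end SepCoeffs

section ConstantShift

variable {m : ℕ} [NeZero m] {Y : Type*} [TopologicalSpace Y]

/-- The pairs `(b, c)` such that adding the constant `c` to `depressedPoly b` yields a polynomial
without repeated roots. -/
def shiftFamily (m : ℕ) [NeZero m] : Set ((Fin m → ℂ) × ℂ) :=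
  {z | z.1 + Pi.single 0 z.2 ∈ sepCoeffs m}

lemma continuous_add_single_zero :
    Continuous fun z : (Fin m → ℂ) × ℂ ↦ z.1 + Pi.single 0 z.2 :=
  continuous_fst.add ((continuous_single 0).comp continuous_snd)

lemma isOpen_shiftFamily : IsOpen (shiftFamily m) :=
  isOpen_sepCoeffs.preimage continuous_add_single_zero

/-- The map induced by `q` on `shiftFamily m`. -/
noncomputable def shiftMap (q : C(sepCoeffs m, Y)) : C(shiftFamily m, Y) :=
  q.comp ((⟨_, continuous_add_single_zero⟩ : C((Fin m → ℂ) × ℂ, Fin m → ℂ)).restrictPreimage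
    (sepCoeffs m))

lemma depressedPoly_add_single_zero {R : Type*} [CommRing R] (a : Fin m → R) (c : R) :
    depressedPoly (a + Pi.single 0 c) = depressedPoly a + C c := by
  simp [depressedPoly_add_single]

lemma mem_shiftFamily_iff {b : Fin m → ℂ} {c : ℂ} : (b, c) ∈ shiftFamily m ↔
    ∀ z, (derivative (depressedPoly b)).eval z = 0 → c ≠ -(depressedPoly b).eval z := by
  change _ ∈ sepCoeffs m ↔ _
  rw [mem_sepCoeffs_iff, depressedPoly_add_single_zero]
  simp [eq_neg_iff_add_eq_zero, add_comm]

end ConstantShift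

section Trinomial

variable {m : ℕ} [m.AtLeastTwo] {Y : Type*} [TopologicalSpace Y]

lemma fin_val_one : ((1 : Fin m) : ℕ) = 1 := by
  rw [Fin.val_one', Nat.mod_eq_of_lt (Nat.AtLeastTwo.prop (n := m))]

lemma fin_zero_ne_one : (0 : Fin m) ≠ 1 := fun h ↦ by
  simpa only [Fin.val_zero, fin_val_one, zero_ne_one] using congrArg Fin.val h

/-- The parameters of the trinomial `X ^ (m + 1) - s X + c`. -/
noncomputable def trinomialCoeffs (m : ℕ) [m.AtLeastTwo] (s c : ℂ) : Fin m → ℂ :=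
  Pi.single 1 (-s) + Pi.single 0 c

lemma continuous_trinomialCoeffs :
    Continuous fun z : ℂ × ℂ ↦ trinomialCoeffs m z.1 z.2 :=
  continuous_add_single_zero.comp
    (((continuous_single (A := fun _ : Fin m ↦ ℂ) 1).comp continuous_fst.neg).prodMk continuous_snd)

lemma depressedPoly_trinomialCoeffs (s c : ℂ) :
    depressedPoly (trinomialCoeffs m s c) = X ^ (m + 1) - C s * X + C c := by
  have hlinear := depressedPoly_add_single (0 : Fin m → ℂ) 1 (-s)
  rw [trinomialCoeffs, depressedPoly_add_single_zero, ← zero_add (Pi.single _ _), hlinear,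
    fin_val_one]
  simp [depressedPoly, sub_eq_add_neg]

lemma weightedAct_trinomialCoeffs (l s c : ℂ) :
    weightedAct (coeffWeight m) l (trinomialCoeffs m s c) =
      trinomialCoeffs m (l ^ m * s) (l ^ (m + 1) * c) := by
  have hweight : coeffWeight m 1 = m := by rw [coeffWeight, fin_val_one, Nat.add_sub_cancel]
  funext i
  rcases eq_or_ne i 0 with rfl | h0
  · simp [weightedAct, trinomialCoeffs, coeffWeight, fin_zero_ne_one (m := m)]
  · rcases eq_or_ne i 1 with rfl | h1
    · simp [weightedAct, trinomialCoeffs, hweight, fin_zero_ne_one.symm]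
    · simp [weightedAct, trinomialCoeffs, h0, h1]

/-- The constant such that `X ^ (m + 1) - s X + c` has a repeated root if and only if
`c ^ m = trinomialDiscr m * s ^ (m + 1)`. -/
noncomputable def trinomialDiscr (m : ℕ) : ℂ := m ^ m / (m + 1) ^ (m + 1)

lemma trinomialCoeffs_mem_sepCoeffs_iff {s c : ℂ} :
    trinomialCoeffs m s c ∈ sepCoeffs m ↔ c ^ m ≠ trinomialDiscr m * s ^ (m + 1) := by
  have hm : (m : ℂ) ≠ 0 := NeZero.ne _
  have hm1 : (m : ℂ) + 1 ≠ 0 := Nat.cast_add_one_ne_zero m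
  have hcrit (z : ℂ) : (m + 1) * z ^ m - s = 0 ↔ z ^ m = s / (m + 1) := by
    rw [sub_eq_zero, eq_div_iff hm1, mul_comm]
  simp only [mem_sepCoeffs_iff, depressedPoly_trinomialCoeffs, derivative_add, derivative_sub,
    derivative_X_pow, derivative_C_mul, derivative_X, derivative_C, eval_add, eval_sub, eval_mul,
    eval_pow, eval_X, eval_C, add_zero, mul_one, Nat.add_sub_cancel,
    Nat.cast_add, Nat.cast_one, hcrit]
  constructor
  · intro h hc
    rcases eq_or_ne s 0 with rfl | hs
    · have hc : c = 0 := by simpa [NeZero.ne m] using hc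
      exact h 0 (by simp [NeZero.ne m]) (by simp [hc])
    have hz : (c * (m + 1) / (m * s)) ^ m = s / (m + 1) := by
      rw [div_pow, mul_pow, hc, trinomialDiscr]
      field_simp
      ring
    refine h (c * (m + 1) / (m * s)) hz ?_
    rw [pow_succ, hz]
    field_simp
    ring
  · rintro h z hz hz₀
    refine h ?_
    have hc : c = z * s * (m / (m + 1)) := by
      rw [pow_succ, hz] at hz₀
      field_simp at hz₀ ⊢
      linear_combination hz₀
    rw [hc, mul_pow, mul_pow, hz, trinomialDiscr, div_pow]
    field_simp
    ring

/-- Invariance of a map on `sepCoeffs m` under the weighted action of `ℂ*`. -/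
def IsScalingInvariant (q : C(sepCoeffs m, Y)) : Prop :=
  ∀ ⦃a b : sepCoeffs m⦄ ⦃l : ℂ⦄, l ≠ 0 → b.1 = weightedAct (coeffWeight m) l a → q a = q b

lemma isOpenQuotientMap_pow {k : ℕ} (hk : k ≠ 0) : IsOpenQuotientMap fun c : ℂ ↦ c ^ k := by
  refine ⟨fun u ↦ IsAlgClosed.exists_pow_nat_eq u hk.bot_lt, by fun_prop, ?_⟩
  refine (AnalyticOnNhd.is_constant_or_isOpenMap (g := fun c : ℂ ↦ c ^ k)
    fun z _ ↦ by fun_prop).resolve_left ?_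
  rintro ⟨w, hw⟩
  exact zero_ne_one (α := ℂ) (by simpa [hk] using (hw 0).trans (hw 1).symm)

lemma IsScalingInvariant.apply_trinomialCoeffs_eq {q : C(sepCoeffs m, Y)}
    (hq : IsScalingInvariant q) {s c c' : ℂ} (hcc' : c ^ m = c' ^ m)
    (h : trinomialCoeffs m s c ∈ sepCoeffs m) (h' : trinomialCoeffs m s c' ∈ sepCoeffs m) :
    q ⟨_, h⟩ = q ⟨_, h'⟩ := by
  rcases eq_or_ne c 0 with rfl | hc
  · obtain rfl : c' = 0 := by simpa [NeZero.ne m] using hcc'.symm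
    rfl
  · have hl : (c' / c) ^ m = 1 := by rw [div_pow, ← hcc', div_self (pow_ne_zero m hc)]
    have hl₀ : c' / c ≠ 0 := fun h ↦ by simp [h, NeZero.ne m] at hl
    refine hq hl₀ ?_
    rw [weightedAct_trinomialCoeffs, pow_succ, hl, one_mul, one_mul, div_mul_cancel₀ _ hc]

-- Scaling by an `m`-th root of unity fixes `s` and rotates `c`.
lemma IsScalingInvariant.exists_factor_pow {q : C(sepCoeffs m, Y)} (hq : IsScalingInvariant q) :
    ∃ Φ : C({z : ℂ × ℂ | z.2 ≠ trinomialDiscr m * z.1 ^ (m + 1)}, Y),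
      ∀ s c (h : c ^ m ≠ trinomialDiscr m * s ^ (m + 1)),
        Φ ⟨(s, c ^ m), h⟩ = q ⟨_, trinomialCoeffs_mem_sepCoeffs_iff.2 h⟩ := by
  set T : Set (ℂ × ℂ) := {z | z.2 ≠ trinomialDiscr m * z.1 ^ (m + 1)}
  have hp : IsOpenQuotientMap (T.restrictPreimage (Prod.map id fun c : ℂ ↦ c ^ m)) :=
    (IsOpenQuotientMap.id.prodMap (isOpenQuotientMap_pow (NeZero.ne m))).restrictPreimage T
  let p : C(Prod.map id (fun c : ℂ ↦ c ^ m) ⁻¹' T, T) := ⟨_, hp.continuous⟩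
  let g : C(Prod.map id (fun c : ℂ ↦ c ^ m) ⁻¹' T, Y) :=
    q.comp ⟨fun z ↦ ⟨trinomialCoeffs m z.1.1 z.1.2, trinomialCoeffs_mem_sepCoeffs_iff.2 z.2⟩,
      (continuous_trinomialCoeffs.comp continuous_subtype_val).subtype_mk _⟩
  have hg (z z') (h : p z = p z') : g z = g z' := by
    obtain ⟨⟨⟨s, c⟩, hz⟩, ⟨⟨s', c'⟩, hz'⟩⟩ := z, z'
    obtain ⟨rfl, hcc'⟩ := Prod.mk.inj (congrArg Subtype.val h)
    exact hq.apply_trinomialCoeffs_eq hcc' _ _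
  have hpq : IsQuotientMap p := hp.isQuotientMap
  exact ⟨hpq.lift g hg, fun s c h ↦ DFunLike.congr_fun (hpq.lift_comp g hg) ⟨(s, c), h⟩⟩

lemma IsScalingInvariant.apply_trinomialCoeffs_zero {q : C(sepCoeffs m, Y)}
    (hq : IsScalingInvariant q) {c : ℂ} (hc : c ≠ 0) (h : trinomialCoeffs m 0 c ∈ sepCoeffs m)
    (h' : trinomialCoeffs m 0 1 ∈ sepCoeffs m) : q ⟨_, h⟩ = q ⟨_, h'⟩ := by
  obtain ⟨l, rfl⟩ := IsAlgClosed.exists_pow_nat_eq c m.succ_pos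
  have hl : l ≠ 0 := fun hl ↦ hc (by simp [hl])
  exact (hq hl (by simp [weightedAct_trinomialCoeffs])).symm

lemma mem_shiftFamily_trinomial_iff {c : ℂ} :
    (Pi.single 1 (-1), c) ∈ shiftFamily m ↔ c ^ m ≠ trinomialDiscr m :=
  trinomialCoeffs_mem_sepCoeffs_iff.trans (by rw [one_pow, mul_one])

-- In the coordinates `(s, c ^ m)` the fibre over `s = 1` is a punctured line, which deforms into
-- the fibre over `s = 0`, a single orbit.
lemma IsScalingInvariant.isPiOneTrivial_fiberMap_trinomial {q : C(sepCoeffs m, Y)}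
    (hq : IsScalingInvariant q) :
    IsPiOneTrivial (fiberMap (shiftMap q) (Pi.single 1 (-1))) := by
  obtain ⟨Φ, hΦ⟩ := hq.exists_factor_pow
  have h₁ : trinomialCoeffs m 0 1 ∈ sepCoeffs m := trinomialCoeffs_mem_sepCoeffs_iff.2 (by simp)
  have hfib (c : Prod.mk (Pi.single 1 (-1)) ⁻¹' shiftFamily m) : c.1 ^ m ≠ trinomialDiscr m :=
    mem_shiftFamily_trinomial_iff.1 c.2
  let κ := trinomialDiscr m
  have hmem (t : I) (c : Prod.mk (Pi.single 1 (-1)) ⁻¹' shiftFamily m) :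
      c.1 ^ m - κ + κ * (1 - (t : ℂ)) ^ (m + 1) ≠ κ * (1 - (t : ℂ)) ^ (m + 1) := fun h ↦
    hfib c (by linear_combination h)
  have hstart (c) : Φ ⟨(1 - ((0 : I) : ℂ), _), hmem 0 c⟩ = fiberMap (shiftMap q) _ c := by
    refine Eq.trans ?_ (hΦ 1 c.1 (by simpa using hfib c))
    congr 3 <;> simp [κ]
  have hend (c) : Φ ⟨(1 - ((1 : I) : ℂ), _), hmem 1 c⟩ = q ⟨_, h₁⟩ := by
    obtain ⟨c', hc'⟩ := IsAlgClosed.exists_pow_nat_eq (c.1 ^ m - κ) (NeZero.pos m)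
    have hc'₀ : c' ≠ 0 := by
      rintro rfl
      exact hfib c (by simpa [NeZero.ne m, sub_eq_zero, eq_comm] using hc')
    have hc'm : c' ^ m ≠ κ * 0 ^ (m + 1) := by simp [hc'₀]
    rw [← hq.apply_trinomialCoeffs_zero hc'₀ (trinomialCoeffs_mem_sepCoeffs_iff.2 hc'm) h₁]
    convert hΦ 0 c' hc'm using 2
    simp [hc']
  refine (IsPiOneTrivial.const (q ⟨_, h₁⟩)).of_homotopic (.symm ⟨?_⟩)
  exact
    { toFun := fun z ↦ Φ ⟨(1 - (z.1 : ℂ), _), hmem z.1 z.2⟩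
      continuous_toFun := Φ.continuous.comp (Continuous.subtype_mk (by fun_prop) _)
      map_zero_left := hstart
      map_one_left := hend }

end Trinomial

section CriticalPoints

variable {R S : Type*} [CommRing R] [Algebra ℂ R] [CommRing S] [Algebra ℂ S] {m : ℕ}

/-- The parameters of the polynomial with constant coefficient zero whose derivative is `m + 1`
times `rootPoly w`, when the values of `w` add up to zero. The constant coefficient is obtained
from the convention that division by zero gives zero. -/
noncomputable def critCoeffs (w : Fin m → R) (i : Fin m) : R :=
  ((m + 1) / (i : ℕ) : ℂ) • (rootPoly w).coeff (i - 1)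

/-- The value at the critical point `w j` of the polynomial with parameters `critCoeffs w`. -/
noncomputable def critValue (w : Fin m → R) (j : Fin m) : R :=
  (depressedPoly (critCoeffs w)).eval (w j)

lemma map_critValue (φ : R →ₐ[ℂ] S) (w : Fin m → R) (j : Fin m) :
    φ (critValue w j) = critValue (φ ∘ w) j := by
  have hcoeff (k : ℕ) : φ ((rootPoly w).coeff k) = (rootPoly (φ ∘ w)).coeff k := by
    simpa using congrArg (coeff · k) (map_rootPoly (φ : R →+* S) w)
  simp [critValue, eval_depressedPoly, critCoeffs, hcoeff]

lemma continuous_critCoeffs : Continuous (critCoeffs : (Fin m → ℂ) → Fin m → ℂ) :=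
  continuous_pi fun i ↦ (continuous_coeff_rootPoly (i - 1)).const_smul ((m + 1) / (i : ℕ) : ℂ)

lemma continuous_critValue : Continuous (critValue : (Fin m → ℂ) → Fin m → ℂ) := by
  have := continuous_critCoeffs (m := m)
  refine continuous_pi fun j ↦ ?_
  simp only [critValue, eval_depressedPoly]
  fun_prop

lemma derivative_depressedPoly_critCoeffs {w : Fin m → ℂ} (hw : ∑ i, w i = 0) :
    derivative (depressedPoly (critCoeffs w)) = C (m + 1 : ℂ) * rootPoly w := by
  ext k
  rw [coeff_derivative, coeff_C_mul, coeff_depressedPoly]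
  rcases lt_trichotomy (k + 1) m with h | rfl | h
  · have : (k : ℂ) + 1 ≠ 0 := Nat.cast_add_one_ne_zero k
    simp [h, show k ≠ m by omega, critCoeffs]
    field_simp
  · have hpred := coeff_rootPoly_pred k.succ_pos w
    rw [hw, neg_zero, Nat.succ_sub_one] at hpred
    simp [hpred]
  · rcases (Nat.le_of_lt_succ h).eq_or_lt with rfl | hk
    · simp [coeff_rootPoly_self]
    · simp [coeff_eq_zero_of_natDegree_lt ((natDegree_rootPoly w).trans_lt hk), hk.ne',
        show ¬ k + 1 < m by omega]

lemma eval_derivative_depressedPoly_critCoeffs_eq_zero_iff {w : Fin m → ℂ} (hw : ∑ i, w i = 0)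
    {z : ℂ} : (derivative (depressedPoly (critCoeffs w))).eval z = 0 ↔ ∃ j, w j = z := by
  rw [derivative_depressedPoly_critCoeffs hw, eval_mul, eval_C,
    mul_eq_zero_iff_left (Nat.cast_add_one_ne_zero m), eval_rootPoly_eq_zero_iff]

lemma mem_shiftFamily_critCoeffs_iff [NeZero m] {w : Fin m → ℂ} (hw : ∑ i, w i = 0) {c : ℂ} :
    (critCoeffs w, c) ∈ shiftFamily m ↔ ∀ j, c ≠ -critValue w j := by
  simp only [mem_shiftFamily_iff, eval_derivative_depressedPoly_critCoeffs_eq_zero_iff hw,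
    forall_exists_index, forall_apply_eq_imp_iff, critValue]

lemma exists_critCoeffs_add_single_eq [NeZero m] (a : Fin m → ℂ) :
    ∃ w : Fin m → ℂ, ∑ i, w i = 0 ∧ critCoeffs w + Pi.single 0 (a 0) = a := by
  have hm1 : (m : ℂ) + 1 ≠ 0 := Nat.cast_add_one_ne_zero m
  set p : ℂ[X] := C (m + 1 : ℂ)⁻¹ * derivative (depressedPoly a) with hp
  have hcoeff (k : ℕ) :
      p.coeff k = (m + 1 : ℂ)⁻¹ * ((depressedPoly a).coeff (k + 1) * (k + 1)) := by
    rw [hp, coeff_C_mul, coeff_derivative]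
  have hdeg : p.natDegree = m := by
    rw [hp, natDegree_C_mul (inv_ne_zero hm1), natDegree_derivative, natDegree_depressedPoly,
      Nat.add_sub_cancel]
  have hmonic : p.Monic := by
    rw [Monic, leadingCoeff, hdeg, hcoeff, coeff_depressedPoly_succ, one_mul, inv_mul_cancel₀ hm1]
  obtain ⟨w, hw⟩ := exists_rootPoly_eq hmonic hdeg
  refine ⟨w, ?_, funext fun i ↦ ?_⟩
  · have hpred := coeff_rootPoly_pred (NeZero.pos m) w
    rw [hw, hcoeff, Nat.sub_add_cancel NeZero.one_le, coeff_depressedPoly_self, zero_mul,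
      mul_zero] at hpred
    exact neg_eq_zero.1 hpred.symm
  · rcases eq_or_ne i 0 with rfl | hi
    · simp [critCoeffs]
    · have hi' : ((i : ℕ) : ℂ) ≠ 0 := by simpa using hi
      have hpos : 1 ≤ (i : ℕ) := Nat.one_le_iff_ne_zero.2 (by simpa using hi)
      rw [Pi.add_apply, Pi.single_eq_of_ne hi, add_zero, critCoeffs, hw, hcoeff,
        Nat.sub_add_cancel hpos, coeff_depressedPoly_fin, Nat.cast_pred hpos, sub_add_cancel,
        smul_eq_mul]
      field_simp

lemma finite_setOf_not_injective_critValue_lineMap {w w₀ : Fin m → ℂ}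
    (h : Function.Injective (critValue w₀)) :
    {s : ℂ | ¬Function.Injective (critValue (AffineMap.lineMap w w₀ s))}.Finite := by
  let W : Fin m → ℂ[X] := fun j ↦ C (w j) + X * C (w₀ j - w j)
  have hW (s : ℂ) (j : Fin m) :
      (critValue W j).eval s = critValue (AffineMap.lineMap w w₀ s) j := by
    have hline : aeval s ∘ W = AffineMap.lineMap w w₀ s := by
      funext i
      simp [W, AffineMap.lineMap_apply, add_comm]
    rw [← hline, ← map_critValue, coe_aeval_eq_eval]
  have hne {j k : Fin m} (hjk : j ≠ k) : critValue W j - critValue W k ≠ 0 := fun h₀ ↦ by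
    refine hjk (h ?_)
    simpa [hW, sub_eq_zero] using congrArg (eval 1) h₀
  refine (finite_iUnion fun j ↦ finite_iUnion fun k ↦ finite_iUnion fun hjk : j ≠ k ↦
    finite_setOfPred_isRoot (hne hjk)).subset fun s hs ↦ ?_
  obtain ⟨j, k, hjk, hne⟩ := Function.not_injective_iff.1 hs
  simp only [mem_iUnion]
  exact ⟨j, k, hne, by simp [hW, hjk]⟩

end CriticalPoints

section Pencil

variable {m : ℕ} [m.AtLeastTwo] {Y : Type*} [TopologicalSpace Y]

-- The critical points of `X ^ (m + 1) - X` are the roots `z` of `z ^ m = 1 / (m + 1)`, so its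
-- critical values `-z m / (m + 1)` are distinct.
lemma exists_critCoeffs_eq_single_injective_critValue : ∃ w₀ : Fin m → ℂ, ∑ i, w₀ i = 0 ∧
    critCoeffs w₀ = Pi.single 1 (-1) ∧ Function.Injective (critValue w₀) := by
  have hm : (m : ℂ) ≠ 0 := NeZero.ne _
  have hm1 : (m : ℂ) + 1 ≠ 0 := Nat.cast_add_one_ne_zero m
  obtain ⟨w₀, hw₀, htri⟩ := exists_critCoeffs_add_single_eq (trinomialCoeffs m 1 0)
  have hcrit : critCoeffs w₀ = trinomialCoeffs m 1 0 := by
    simpa [trinomialCoeffs, fin_zero_ne_one (m := m)] using htri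
  have hroot : rootPoly w₀ = X ^ m - C (1 / (m + 1) : ℂ) := by
    have hderiv := derivative_depressedPoly_critCoeffs hw₀
    rw [hcrit, depressedPoly_trinomialCoeffs] at hderiv
    refine mul_left_cancel₀ (C_ne_zero.2 hm1) (hderiv.symm.trans ?_)
    rw [mul_sub, ← C_mul, mul_one_div_cancel hm1]
    simp
  have hsep : (rootPoly w₀).Separable := by
    rw [hroot]
    exact separable_X_pow_sub_C _ hm (one_div_ne_zero hm1)
  have hvalue (j : Fin m) : critValue w₀ j = w₀ j * -(m / (m + 1)) := by
    have hj : w₀ j ^ m = 1 / (m + 1) := by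
      simpa [hroot, sub_eq_zero] using eval_rootPoly_eq_zero_iff.2 (⟨j, rfl⟩ : ∃ i, w₀ i = w₀ j)
    rw [critValue, hcrit, depressedPoly_trinomialCoeffs]
    simp only [eval_add, eval_sub, eval_mul, eval_pow, eval_X, eval_C, pow_succ, hj]
    field_simp
    ring
  refine ⟨w₀, hw₀, by simp [hcrit, trinomialCoeffs], fun j k hjk ↦
    separable_prod_X_sub_C_iff.1 hsep ?_⟩
  rw [hvalue, hvalue] at hjk
  exact mul_right_cancel₀ (neg_ne_zero.2 (div_ne_zero hm hm1)) hjk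

lemma IsPiOneTrivial.fiberMap_shiftMap_add_single {q : C(sepCoeffs m, Y)} {b : Fin m → ℂ}
    (h : IsPiOneTrivial (fiberMap (shiftMap q) b)) (c : ℂ) :
    IsPiOneTrivial (fiberMap (shiftMap q) (b + Pi.single 0 c)) := by
  have hadd (c' : ℂ) : b + Pi.single 0 c + Pi.single 0 c' = b + Pi.single 0 (c + c') := by
    rw [add_assoc, ← Pi.single_add]
  let translate : C(Prod.mk (b + Pi.single 0 c) ⁻¹' shiftFamily m, Prod.mk b ⁻¹' shiftFamily m) :=
    ⟨fun c' ↦ ⟨c + c', (congrArg (· ∈ sepCoeffs m) (hadd c')).mp c'.2⟩, by fun_prop⟩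
  convert h.comp translate using 1
  exact ContinuousMap.ext fun c' ↦ congrArg q (Subtype.ext (hadd c'))

-- The critical values move polynomially along the line of critical points from `w` to `w₀`, so
-- they are distinct outside a finite set of parameters, whose complement is connected and dense.
theorem IsScalingInvariant.isPiOneTrivial_fiberMap {q : C(sepCoeffs m, Y)}
    (hq : IsScalingInvariant q) (a : Fin m → ℂ) : IsPiOneTrivial (fiberMap (shiftMap q) a) := by
  obtain ⟨w, hw, ha⟩ := exists_critCoeffs_add_single_eq a
  obtain ⟨w₀, hw₀, hcrit, hinj⟩ := exists_critCoeffs_eq_single_injective_critValue (m := m)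
  have hline : Continuous (AffineMap.lineMap w w₀ : ℂ → Fin m → ℂ) := AffineMap.lineMap_continuous
  have hsum (s : ℂ) : ∑ i, AffineMap.lineMap w w₀ s i = 0 := by
    simp [AffineMap.lineMap_apply, Finset.sum_add_distrib, ← Finset.mul_sum, hw, hw₀]
  let g : C(ℂ, Fin m → ℂ) :=
    ⟨fun s ↦ critCoeffs (AffineMap.lineMap w w₀ s), continuous_critCoeffs.comp hline⟩
  have hfam : Prod.map g id ⁻¹' shiftFamily m =
      avoidFamily fun s ↦ -critValue (AffineMap.lineMap w w₀ s) :=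
    ext fun z ↦ mem_shiftFamily_critCoeffs_iff (hsum z.1)
  let Ψ : C(Prod.map g id ⁻¹' shiftFamily m, Y) :=
    (shiftMap q).comp ((g.prodMap (.id ℂ)).restrictPreimage (shiftFamily m))
  have hfin := finite_setOf_not_injective_critValue_lineMap (w := w) hinj
  have hstart : IsPiOneTrivial (fiberMap Ψ 1) := by
    have hg : g 1 = Pi.single 1 (-1) := by simp [g, hcrit]
    have htri := hq.isPiOneTrivial_fiberMap_trinomial
    rw [← hg] at htri
    exact htri
  have hend : IsPiOneTrivial (fiberMap Ψ 0) :=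
    isPiOneTrivial_fiberMap_of_eq_avoidFamily (continuous_critValue.comp hline).neg hfam Ψ
      (hfin.countable.isPathConnected_compl_of_one_lt_rank
        (by simp [rank_real_complex])).isConnected.isPreconnected
      (fun s hs ↦ neg_injective.comp (not_not.1 hs)) (by simpa using hinj) hstart
      (hfin.countable.dense_compl ℝ 0)
  have hg : g 0 = critCoeffs w := by simp [g]
  rw [← ha, ← hg]
  exact hend.fiberMap_shiftMap_add_single (a 0)

end Pencil

section ConfigurationFamily

variable {m : ℕ} {Y : Type*} [TopologicalSpace Y]

lemma norm_le_of_eval_derivative_depressedPoly_eq_zero [NeZero m] {b : Fin m → ℂ} {z : ℂ}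
    (hz : (derivative (depressedPoly b)).eval z = 0) : ‖z‖ ≤ 1 + m * ‖b‖ := by
  by_contra! hlt
  have hz1 : 1 ≤ ‖z‖ := (le_add_of_nonneg_right (by positivity)).trans hlt.le
  have hm : (0 : ℝ) < m := Nat.cast_pos.2 (NeZero.pos m)
  have hlead : ‖(m + 1 : ℂ)‖ = m + 1 := by simpa using Complex.norm_natCast (m + 1)
  rw [eval_derivative_depressedPoly, add_eq_zero_iff_eq_neg] at hz
  have hle : (m + 1) * ‖z‖ ^ m ≤ ∑ _i : Fin m, ‖b‖ * m * ‖z‖ ^ (m - 1) := by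
    rw [← hlead, ← norm_pow, ← norm_mul, hz, norm_neg]
    refine (norm_sum_le _ _).trans (Finset.sum_le_sum fun i _ ↦ ?_)
    rw [norm_mul, norm_mul, norm_pow, norm_natCast]
    gcongr
    · exact norm_le_pi_norm b i
    · exact i.2.le
    · exact i.2.le
  rw [Finset.sum_const, Finset.card_fin, nsmul_eq_mul, ← mul_pow_sub_one (NeZero.ne m) ‖z‖,
    ← mul_assoc, ← mul_assoc] at hle
  nlinarith [le_of_mul_le_mul_right hle (by positivity)]

lemma norm_eval_depressedPoly_le (b : Fin m → ℂ) {z : ℂ} {r : ℝ} (hr : 1 ≤ r) (hz : ‖z‖ ≤ r) :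
    ‖(depressedPoly b).eval z‖ ≤ r ^ (m + 1) + m * (‖b‖ * r ^ m) := by
  have hsum : ‖∑ i, b i * z ^ (i : ℕ)‖ ≤ ∑ _i : Fin m, ‖b‖ * r ^ m := by
    refine (norm_sum_le _ _).trans (Finset.sum_le_sum fun i _ ↦ ?_)
    rw [norm_mul, norm_pow]
    exact mul_le_mul (norm_le_pi_norm b i)
      ((pow_le_pow_left₀ (norm_nonneg z) hz _).trans (pow_le_pow_right₀ hr i.2.le))
      (by positivity) (by positivity)
  rw [eval_depressedPoly]
  refine (norm_add_le _ _).trans (add_le_add ?_ (by simpa using hsum))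
  rw [norm_pow]
  gcongr

-- A constant term larger than every critical value leaves no multiple root.
lemma exists_continuous_section_shiftFamily [NeZero m] :
    ∃ τ : (Fin m → ℂ) → ℂ, Continuous τ ∧ ∀ b, (b, τ b) ∈ shiftFamily m := by
  let bound (b : Fin m → ℂ) : ℝ :=
    (1 + m * ‖b‖) ^ (m + 1) + m * (‖b‖ * (1 + m * ‖b‖) ^ m)
  have bound_nonneg (b) : 0 ≤ bound b := by positivity
  refine ⟨fun b ↦ (bound b + 1 : ℝ), by fun_prop, fun b ↦ mem_shiftFamily_iff.2 fun z hz h ↦ ?_⟩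
  have hle : ‖(depressedPoly b).eval z‖ ≤ bound b :=
    norm_eval_depressedPoly_le b (le_add_of_nonneg_right (by positivity))
      (norm_le_of_eval_derivative_depressedPoly_eq_zero hz)
  rw [← norm_neg, ← h, norm_real, Real.norm_of_nonneg (by linarith [bound_nonneg b])] at hle
  linarith

lemma isPathConnected_fiber_shiftFamily [NeZero m] (b : Fin m → ℂ) :
    IsPathConnected (Prod.mk b ⁻¹' shiftFamily m) := by
  have hne : derivative (depressedPoly b) ≠ 0 := fun h ↦ by
    simpa [natDegree_depressedPoly] using derivative_eq_zero.1 h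
  have hfinite : {z | (derivative (depressedPoly b)).eval z = 0}.Finite :=
    finite_setOfPred_isRoot hne
  have hcompl : Prod.mk b ⁻¹' shiftFamily m =
      ((fun z ↦ -(depressedPoly b).eval z) ''
        {z | (derivative (depressedPoly b)).eval z = 0})ᶜ := by
    ext c
    simp only [mem_preimage, mem_shiftFamily_iff, mem_compl_iff, mem_image, mem_ofPred_eq,
      not_exists, not_and, ne_comm (a := c), ne_eq]
  rw [hcompl]
  exact (hfinite.image _).countable.isPathConnected_compl_of_one_lt_rank (by simp)

/-- The inclusion of `sepCoeffs m` into `shiftFamily m` as the pairs with second entry zero. -/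
def zeroShift (m : ℕ) [NeZero m] : C(sepCoeffs m, shiftFamily m) :=
  ⟨fun a ↦ ⟨(a, 0), by simp [shiftFamily]⟩, by fun_prop⟩

lemma shiftMap_comp_zeroShift [NeZero m] (q : C(sepCoeffs m, Y)) :
    (shiftMap q).comp (zeroShift m) = q := by
  ext a
  refine congrArg q (Subtype.ext ?_)
  change a.1 + Pi.single 0 0 = a.1
  rw [Pi.single_zero, add_zero]

lemma pathConnectedSpace_sepCoeffs [NeZero m] : PathConnectedSpace (sepCoeffs m) := by
  obtain ⟨τ, hτ, hτE⟩ := exists_continuous_section_shiftFamily (m := m)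
  have := pathConnectedSpace_of_section isPathConnected_fiber_shiftFamily hτ hτE
  have hsurj : Function.Surjective (shiftMap (.id (sepCoeffs m))) := fun a ↦
    ⟨zeroShift m a, DFunLike.congr_fun (shiftMap_comp_zeroShift (.id _)) a⟩
  exact hsurj.pathConnectedSpace (map_continuous _)

theorem IsScalingInvariant.isPiOneTrivial [m.AtLeastTwo] {q : C(sepCoeffs m, Y)}
    (hq : IsScalingInvariant q) : IsPiOneTrivial q := by
  obtain ⟨τ, hτ, hτE⟩ := exists_continuous_section_shiftFamily (m := m)
  have hshift : IsPiOneTrivial (shiftMap q) := isPiOneTrivial_of_section isOpen_shiftFamily _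
    isPathConnected_fiber_shiftFamily hq.isPiOneTrivial_fiberMap hτ hτE
  exact shiftMap_comp_zeroShift q ▸ hshift.comp (zeroShift m)

end ConfigurationFamily

section CentredCoefficients

variable {m : ℕ}

/-- The parameters of the depressed polynomial whose roots are the points of `f`, translated so
that their sum is zero. -/
noncomputable def centredCoeffs (f : Fin (m + 1) → ℂ) (i : Fin m) : ℂ :=
  (rootPoly fun j ↦ f j - (∑ k, f k) / (m + 1)).coeff i

lemma continuous_centredCoeffs :
    Continuous (centredCoeffs : (Fin (m + 1) → ℂ) → Fin m → ℂ) :=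
  continuous_pi fun i ↦ (continuous_coeff_rootPoly i).comp (by fun_prop)

lemma depressedPoly_centredCoeffs (f : Fin (m + 1) → ℂ) :
    depressedPoly (centredCoeffs f) = rootPoly fun j ↦ f j - (∑ k, f k) / (m + 1) := by
  refine depressedPoly_coeff (natDegree_rootPoly _).le (coeff_rootPoly_self _) ?_
  have hm : (m + 1 : ℂ) ≠ 0 := Nat.cast_add_one_ne_zero m
  have hpred := coeff_rootPoly_pred m.succ_pos fun j ↦ f j - (∑ k, f k) / (m + 1)
  simpa [mul_div_cancel₀ _ hm] using hpred

lemma centredCoeffs_mem_sepCoeffs {f : Fin (m + 1) → ℂ} (hf : Function.Injective f) :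
    centredCoeffs f ∈ sepCoeffs m :=
  (mem_sepCoeffs_iff_injective (depressedPoly_centredCoeffs f).symm).2 fun _ _ h ↦
    hf (sub_left_injective h)

lemma centredCoeffs_eq_of_rootPoly_eq {f : Fin (m + 1) → ℂ} {a : Fin m → ℂ}
    (h : rootPoly f = depressedPoly a) : centredCoeffs f = a := by
  apply depressedPoly_injective
  simpa [depressedPoly_centredCoeffs, sum_eq_zero_of_rootPoly_eq_depressedPoly h] using h

lemma centredCoeffs_comp_perm (f : Fin (m + 1) → ℂ) (e : Equiv.Perm (Fin (m + 1))) :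
    centredCoeffs (f ∘ e) = centredCoeffs f := by
  apply depressedPoly_injective
  simp only [depressedPoly_centredCoeffs, Function.comp_apply, Equiv.sum_comp e f]
  exact rootPoly_comp_perm (fun j ↦ f j - (∑ k, f k) / (m + 1)) e

lemma centredCoeffs_affine (b a : ℂ) (f : Fin (m + 1) → ℂ) :
    centredCoeffs (fun i ↦ b * f i + a) = weightedAct (coeffWeight m) b (centredCoeffs f) := by
  have hm : (m + 1 : ℂ) ≠ 0 := Nat.cast_add_one_ne_zero m
  apply depressedPoly_injective
  rw [depressedPoly_weightedAct, depressedPoly_centredCoeffs, depressedPoly_centredCoeffs,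
    ← rootPoly_const_mul]
  congr 1
  funext i
  simp only [Finset.sum_add_distrib, ← Finset.mul_sum, Finset.sum_const, Finset.card_fin,
    nsmul_eq_mul, Nat.cast_add, Nat.cast_one]
  field_simp
  ring

end CentredCoefficients

section ConfigClass

variable {n : ℕ}

/-- The affine class of the unordered configuration underlying `f`. -/
def configClass (f : OrdConfig n univ) : ConfigModAff n := Quot.mk _ (Quot.mk _ f)

lemma isQuotientMap_configClass :
    IsQuotientMap (configClass : OrdConfig n univ → ConfigModAff n) :=
  isQuotientMap_quot_mk.comp isQuotientMap_quot_mk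

lemma configClass_eq_of_perm {f g : OrdConfig n univ} (e : Equiv.Perm (Fin n))
    (h : g.1 = f.1 ∘ e) : configClass f = configClass g :=
  congrArg (Quot.mk _) (Quot.sound ⟨e, h⟩)

lemma configClass_eq_of_affine {f g : OrdConfig n univ} {b : ℂ} (hb : b ≠ 0) (a : ℂ)
    (h : ∀ i, g.1 i = b * f.1 i + a) : configClass f = configClass g :=
  Quot.sound ⟨a, b, hb, f, g, rfl, rfl, h⟩

lemma configClass_eq_of_rootPoly_eq {f g : OrdConfig n univ} (h : rootPoly f.1 = rootPoly g.1) :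
    configClass f = configClass g := by
  obtain ⟨e, he⟩ := exists_perm_of_rootPoly_eq g.2.1 h
  exact configClass_eq_of_perm e he

lemma subsingleton_configModAff_two : Subsingleton (ConfigModAff 2) := by
  refine ⟨fun x y ↦ ?_⟩
  obtain ⟨f, rfl⟩ := isQuotientMap_configClass.surjective x
  obtain ⟨g, rfl⟩ := isQuotientMap_configClass.surjective y
  have hf : f.1 1 - f.1 0 ≠ 0 := sub_ne_zero.2 (f.2.1.ne (by decide))
  have hg : g.1 1 - g.1 0 ≠ 0 := sub_ne_zero.2 (g.2.1.ne (by decide))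
  let b := (g.1 1 - g.1 0) / (f.1 1 - f.1 0)
  refine configClass_eq_of_affine (b := b) (div_ne_zero hg hf) (g.1 0 - b * f.1 0) fun i ↦ ?_
  fin_cases i
  · simp
  · simp only [b, Fin.mk_one]
    field_simp
    ring

lemma simplyConnectedSpace_configModAff_two : SimplyConnectedSpace (ConfigModAff 2) := by
  have := subsingleton_configModAff_two
  let f : OrdConfig 2 univ :=
    ⟨fun i ↦ (i : ℕ), Nat.cast_injective.comp Fin.val_injective, fun _ ↦ trivial⟩
  have := uniqueOfSubsingleton (configClass f)
  infer_instance

end ConfigClass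

section RootClass

variable {m : ℕ}

/-- The orbit in the parameter space determined by a configuration up to affine maps. -/
def centredOrbit : ConfigModAff (m + 1) → Set (Fin m → ℂ) :=
  Quot.lift
    (Quot.lift (fun f ↦ weightedOrbit (coeffWeight m) (centredCoeffs f.1)) <| by
      rintro f g ⟨e, he⟩
      rw [he, centredCoeffs_comp_perm])
    (by
      rintro _ _ ⟨a, b, hb, f, g, rfl, rfl, h⟩
      change weightedOrbit _ (centredCoeffs f.1) = weightedOrbit _ (centredCoeffs g.1)
      rw [funext h, centredCoeffs_affine, weightedOrbit_weightedAct hb])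

lemma centredCoeffs_mem_weightedOrbit_of_configClass_eq {f g : OrdConfig (m + 1) univ}
    (h : configClass f = configClass g) :
    centredCoeffs g.1 ∈ weightedOrbit (coeffWeight m) (centredCoeffs f.1) := by
  have horbit : weightedOrbit (coeffWeight m) (centredCoeffs f.1) =
      weightedOrbit (coeffWeight m) (centredCoeffs g.1) := congrArg centredOrbit h
  exact horbit ▸ self_mem_weightedOrbit _

lemma exists_config_rootPoly_eq (a : sepCoeffs m) :
    ∃ f : OrdConfig (m + 1) univ, rootPoly f.1 = depressedPoly a.1 := by
  obtain ⟨f, hf⟩ := exists_rootPoly_eq_depressedPoly a.1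
  exact ⟨⟨f, (mem_sepCoeffs_iff_injective hf).1 a.2, fun _ ↦ trivial⟩, hf⟩

/-- The affine class of the set of roots of `depressedPoly a`. -/
noncomputable def rootClass (a : sepCoeffs m) : ConfigModAff (m + 1) :=
  configClass (exists_config_rootPoly_eq a).choose

lemma rootClass_eq {a : sepCoeffs m} {f : OrdConfig (m + 1) univ}
    (h : rootPoly f.1 = depressedPoly a.1) : rootClass a = configClass f :=
  configClass_eq_of_rootPoly_eq ((exists_config_rootPoly_eq a).choose_spec.trans h.symm)

lemma rootClass_centredCoeffs (f : OrdConfig (m + 1) univ) :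
    rootClass ⟨centredCoeffs f.1, centredCoeffs_mem_sepCoeffs f.2.1⟩ = configClass f := by
  let g : OrdConfig (m + 1) univ :=
    ⟨fun j ↦ f.1 j - (∑ k, f.1 k) / (m + 1), fun _ _ h ↦ f.2.1 (sub_left_injective h),
      fun _ ↦ trivial⟩
  have hg : rootClass ⟨centredCoeffs f.1, centredCoeffs_mem_sepCoeffs f.2.1⟩ = configClass g :=
    rootClass_eq (depressedPoly_centredCoeffs f.1).symm
  have hgf : configClass g = configClass f :=
    configClass_eq_of_affine one_ne_zero ((∑ k, f.1 k) / (m + 1)) fun j ↦ by simp [g]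
  exact hg.trans hgf

lemma rootClass_eq_rootClass_iff (a b : sepCoeffs m) :
    rootClass a = rootClass b ↔ ∃ l ≠ 0, b.1 = weightedAct (coeffWeight m) l a := by
  obtain ⟨f, hf⟩ := exists_config_rootPoly_eq a
  obtain ⟨g, hg⟩ := exists_config_rootPoly_eq b
  rw [rootClass_eq hf, rootClass_eq hg]
  constructor
  · intro h
    have horbit := centredCoeffs_mem_weightedOrbit_of_configClass_eq h
    rwa [centredCoeffs_eq_of_rootPoly_eq hf, centredCoeffs_eq_of_rootPoly_eq hg] at horbit
  · rintro ⟨l, hl, hb⟩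
    let lf : OrdConfig (m + 1) univ :=
      ⟨fun i ↦ l * f.1 i, (mul_right_injective₀ hl).comp f.2.1, fun _ ↦ trivial⟩
    have hlf : rootPoly lf.1 = rootPoly g.1 := by
      rw [hg, hb, depressedPoly_weightedAct, ← hf, ← rootPoly_const_mul]
    rw [← configClass_eq_of_rootPoly_eq hlf]
    exact configClass_eq_of_affine hl 0 fun i ↦ (add_zero _).symm

lemma isOpenEmbedding_val_ordConfig (n : ℕ) :
    IsOpenEmbedding (Subtype.val : OrdConfig n univ → Fin n → ℂ) := by
  refine IsOpen.isOpenEmbedding_subtypeVal (s := {f | Function.Injective f ∧ ∀ i, f i ∈ univ}) ?_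
  simpa only [mem_univ, implies_true, and_true, compl_ofPred, not_not] using
    (isClosed_setOf_not_injective (ι := Fin n) (X := ℂ)).isOpen_compl

lemma continuous_rootClass : Continuous (rootClass (m := m)) := by
  refine continuous_def.2 fun U hU ↦ ?_
  let V : Set (Fin (m + 1) → ℂ) := Subtype.val '' (configClass ⁻¹' U)
  have hV : IsOpen V := (isOpenEmbedding_val_ordConfig (m + 1)).isOpenMap _
    (hU.preimage isQuotientMap_configClass.continuous)
  convert ((isClosed_setOf_exists_rootPoly_eq hV.isClosed_compl).preimage
    continuous_subtype_val).isOpen_compl using 1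
  ext a
  obtain ⟨f, hf⟩ := exists_config_rootPoly_eq a
  constructor
  · rintro ha ⟨g, hg, hga⟩
    let g' : OrdConfig (m + 1) univ :=
      ⟨g, (mem_sepCoeffs_iff_injective hga).1 a.2, fun _ ↦ trivial⟩
    exact hg ⟨g', by rwa [mem_preimage, ← rootClass_eq (f := g') hga], rfl⟩
  · intro ha
    by_contra hfU
    refine ha ⟨f.1, ?_, hf⟩
    rintro ⟨f', hf', hff'⟩
    rw [Subtype.ext hff'] at hf'
    exact hfU (by rwa [mem_preimage, rootClass_eq hf])

lemma isOpenMap_rootClass : IsOpenMap (rootClass (m := m)) := by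
  intro V hV
  have hV' : IsOpen (Subtype.val '' V) := isOpen_sepCoeffs.isOpenMap_subtype_val V hV
  have hpreimage : configClass ⁻¹' (rootClass '' V) = ⋃ (l : ℂ) (_ : l ≠ 0),
      {f | weightedAct (coeffWeight m) l (centredCoeffs f.1) ∈ Subtype.val '' V} := by
    ext f
    simp only [mem_preimage, mem_image, mem_iUnion, mem_ofPred_eq, ← rootClass_centredCoeffs f,
      @eq_comm _ (rootClass _) (rootClass ⟨centredCoeffs f.1, _⟩), rootClass_eq_rootClass_iff]
    grind
  rw [← isQuotientMap_configClass.isOpen_preimage, hpreimage]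
  refine isOpen_biUnion fun l _ ↦ hV'.preimage ?_
  have := continuous_centredCoeffs (m := m)
  unfold weightedAct
  fun_prop

lemma isWeightedOrbitMap_rootClass :
    IsWeightedOrbitMap (coeffWeight m) (⟨rootClass, continuous_rootClass⟩ : C(sepCoeffs m, _)) where
  weightedAct_mem _ ha _ hl := weightedAct_mem_sepCoeffs ha hl
  isOpenQuotientMap := by
    refine ⟨fun x ↦ ?_, continuous_rootClass, isOpenMap_rootClass⟩
    obtain ⟨f, rfl⟩ := isQuotientMap_configClass.surjective x
    exact ⟨_, rootClass_centredCoeffs f⟩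
  apply_eq_iff := rootClass_eq_rootClass_iff

end RootClass

/-- For `n ≥ 2`, the orbit space `C_n(ℂ)/(ℂ⋊ℂ*) ≅ M_{0,n+1}/Σ_n` is simply connected. -/
theorem configModAff_simplyConnected (n : ℕ) (hn : 2 ≤ n) :
    SimplyConnectedSpace (ConfigModAff n) := by
  obtain rfl | hn : n = 2 ∨ 2 < n := hn.eq_or_lt.imp_left Eq.symm
  · exact simplyConnectedSpace_configModAff_two
  obtain ⟨m, rfl⟩ : ∃ m, n = m + 1 := ⟨n - 1, by omega⟩
  have : m.AtLeastTwo := ⟨by omega⟩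
  have := pathConnectedSpace_sepCoeffs (m := m)
  have hq := isWeightedOrbitMap_rootClass (m := m)
  have hinv : IsScalingInvariant (⟨rootClass, continuous_rootClass⟩ : C(sepCoeffs m, _)) :=
    fun a b l hl hb ↦ (hq.apply_eq_iff a b).2 ⟨l, hl, hb⟩
  exact simplyConnectedSpace_of_isPiOneTrivial hq.isOpenQuotientMap.surjective
    hinv.isPiOneTrivial hq.hasJoinedFibers
    (hq.hasLiftableContractionAt coeffWeight_ne_zero isOpen_sepCoeffs zero_notMem_sepCoeffs)
end

section
/- Let p be a prime, q ≥ 1, and n = pq. Let ζ = e^{2πi/p}. The fixed-point subspace C_n(ℂ)^{ℤ/p} of C_n(ℂ), consisting of those unordered configurations that are mapped to themselves by multiplication of every point by ζ, equipped with the subspace topology, is homeomorphic to the unordered configuration space C_q(ℂ∖{0}) of q points in the punctured plane. -/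
open Complex Topology

/-- The fixed-point set `C_n(ℂ)^{ℤ/p}`: unordered configurations whose underlying set of
points is invariant under multiplication by `ζ = e^{2πi/p}`. -/
def zetaFixed (p n : ℕ) : Set (UConfig n Set.univ) :=
  {c | ∃ (f : OrdConfig n Set.univ) (σ : Equiv.Perm (Fin n)),
        Quot.mk _ f = c ∧
        ∀ i, f.1 (σ i) = Complex.exp (2 * Real.pi * Complex.I / p) * f.1 i}

/-!
Counting `p`-th powers shows that a `ζ`-invariant configuration of `pq` points contains `q` nonzero
points with distinct `p`-th powers when `p ≥ 2`; by invariance it is the union of their `q` free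
`ζ`-orbits, and `z ↦ z ^ p` turns the orbits into `q` distinct points of `ℂ ∖ {0}`. To see that this
bijection is a homeomorphism, consider the space of ordered `q`-tuples of orbit representatives.
Taking `p`-th powers and taking unions of orbits are open quotient maps from it to the two spaces,
and they have the same fibres.
-/

open Function Set

section OrbitFamily

variable {ι M K : Type*}

/-- The family `ζ ^ j * g i`, indexed by `j < p` and `i`. When `ζ ^ p = 1` its range is the union of
the orbits of the points `g i` under multiplication by `ζ`. -/
def orbitFamily [Monoid M] (ζ : M) (p : ℕ) (g : ι → M) (k : Fin p × ι) : M :=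
  ζ ^ (k.1 : ℕ) * g k.2

lemma range_orbitFamily_subset [Monoid M] {ζ : M} {p : ℕ} {g : ι → M} {S : Set M}
    (hS : MapsTo (ζ * ·) S S) (hg : range g ⊆ S) : range (orbitFamily ζ p g) ⊆ S := by
  rintro _ ⟨⟨j, i⟩, rfl⟩
  have hpow : MapsTo (ζ ^ (j : ℕ) * ·) S S := mul_left_iterate ζ j ▸ hS.iterate j
  exact hpow (hg (mem_range_self i))

lemma continuous_orbitFamily [Monoid M] [TopologicalSpace M] [ContinuousMul M] (ζ : M) (p : ℕ) :
    Continuous (orbitFamily ζ p : (ι → M) → Fin p × ι → M) := by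
  unfold orbitFamily
  fun_prop

variable [CommRing K] [IsDomain K] {ζ : K} {p : ℕ} {g : ι → K}

lemma range_orbitFamily [NeZero p] (hζ : IsPrimitiveRoot ζ p) :
    range (orbitFamily ζ p g) = (· ^ p) ⁻¹' range (g ^ p) := by
  have mem_orbit_iff (i : ι) (z : K) : (∃ j : Fin p, ζ ^ (j : ℕ) * g i = z) ↔ g i ^ p = z ^ p := by
    rw [eq_comm, ← Polynomial.mem_nthRoots (NeZero.pos p), hζ.nthRoots_eq rfl]
    simp only [Multiset.mem_map, Multiset.mem_range, Fin.exists_iff, exists_prop]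
  ext z
  simp only [orbitFamily, mem_range, Prod.exists, mem_preimage, Pi.pow_apply, ← mem_orbit_iff]
  exact exists_comm

lemma injective_orbitFamily (hζ : IsPrimitiveRoot ζ p) (hg : Injective (g ^ p))
    (hg0 : ∀ i, g i ≠ 0) : Injective (orbitFamily ζ p g) := by
  have pow_orbitFamily (k : Fin p × ι) : orbitFamily ζ p g k ^ p = (g ^ p) k.2 := by
    rw [orbitFamily, mul_pow, pow_right_comm, hζ.pow_eq_one, one_pow, one_mul, Pi.pow_apply]
  rintro ⟨j, i⟩ ⟨j', i'⟩ h
  obtain rfl : i = i' := hg <| by simpa only [pow_orbitFamily] using congrArg (· ^ p) h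
  have hj : ζ ^ (j : ℕ) = ζ ^ (j' : ℕ) := mul_right_cancel₀ (hg0 i) h
  rw [Fin.ext (hζ.pow_inj j.is_lt j'.is_lt hj)]

end OrbitFamily

section Counting

variable {α β K : Type*}

lemma exists_injective_comp_of_le_card_image [DecidableEq β] {φ : α → β} {S : Finset α} {q : ℕ}
    (h : q ≤ (S.image φ).card) : ∃ g : Fin q → α, (∀ i, g i ∈ S) ∧ Injective (φ ∘ g) := by
  obtain ⟨e⟩ : Nonempty (Fin q ↪ S.image φ) :=
    Embedding.nonempty_of_card_le (by simpa only [Fintype.card_fin, Fintype.card_coe] using h)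
  choose g hgS hg using fun i => Finset.mem_image.mp (e i).2
  refine ⟨g, hgS, ?_⟩
  rw [show φ ∘ g = Subtype.val ∘ e from funext hg]
  exact Subtype.val_injective.comp e.injective

variable [CommRing K] [IsDomain K] [DecidableEq K] {p q : ℕ}

lemma card_le_mul_card_image_pow (hp : 0 < p) (S : Finset K) :
    S.card ≤ p * (S.image (· ^ p)).card := by
  refine Finset.card_le_mul_card_image S p fun b _ => ?_
  calc (S.filter (· ^ p = b)).card
      ≤ (Polynomial.nthRoots p b).toFinset.card := Finset.card_le_card fun x hx => by
        rw [Multiset.mem_toFinset, Polynomial.mem_nthRoots hp]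
        exact (Finset.mem_filter.mp hx).2
    _ ≤ (Polynomial.nthRoots p b).card := Multiset.toFinset_card_le _
    _ ≤ p := Polynomial.card_nthRoots p b

lemma le_card_image_pow_erase_zero (hp : 2 ≤ p) {S : Finset K} (hS : p * q ≤ S.card) :
    q ≤ ((S.erase 0).image (· ^ p)).card := by
  have hcard : p * q ≤ p * ((S.erase 0).image (· ^ p)).card + 1 := by
    have := card_le_mul_card_image_pow (p := p) (by lia) (S.erase 0)
    have := Finset.pred_card_le_card_erase (s := S) (a := 0)
    lia
  by_contra! hlt
  have : p * (((S.erase 0).image (· ^ p)).card + 1) ≤ p * q := Nat.mul_le_mul_left p hlt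
  lia

end Counting

section Quotients

variable {ι X Y Z : Type*} [TopologicalSpace X] [TopologicalSpace Y] [TopologicalSpace Z]

lemma isOpen_setOf_injective [Finite ι] [T2Space X] : IsOpen {f : ι → X | Injective f} := by
  have : {f : ι → X | Injective f} = ⋂ (a) (b) (_ : a ≠ b), {f | f a ≠ f b} := by
    ext f
    simp only [mem_iInter, mem_ofPred_eq, injective_iff_pairwise_ne, Pairwise, Function.onFun]
  rw [this]
  exact isOpen_iInter_of_finite fun a => isOpen_iInter_of_finite fun b =>
    isOpen_iInter_of_finite fun _ => isOpen_ne_fun (continuous_apply a) (continuous_apply b)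

lemma nonempty_homeomorph_of_isQuotientMap {f : X → Y} {g : X → Z} (hf : IsQuotientMap f)
    (hg : IsQuotientMap g) (h : ∀ a b, f a = f b ↔ g a = g b) : Nonempty (Y ≃ₜ Z) := by
  let eY : Quotient (Setoid.ker f) ≃ₜ Y := hf.homeomorph (f := ⟨f, hf.continuous⟩)
  let eZ : Quotient (Setoid.ker g) ≃ₜ Z := hg.homeomorph (f := ⟨g, hg.continuous⟩)
  exact ⟨eY.symm.trans ((Homeomorph.Quotient.congrRight h).trans eZ)⟩

end Quotients

lemma exists_perm_eq_comp {ι α : Type*} [Finite ι] {f g : ι → α} (hg : Injective g)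
    (h : range g ⊆ range f) : ∃ σ : Equiv.Perm ι, g = f ∘ σ := by
  obtain ⟨s, rfl⟩ := range_subset_range_iff_exists_comp.mp h
  exact ⟨Equiv.ofBijective s (Finite.injective_iff_bijective.mp hg.of_comp), rfl⟩

namespace UConfig

variable {n : ℕ} {X : Set ℂ}

lemma equivalence_permRel (n : ℕ) (X : Set ℂ) : Equivalence (permRel n X) where
  refl _ := ⟨1, rfl⟩
  symm := by
    rintro f g ⟨σ, h⟩
    exact ⟨σ⁻¹, funext fun i => by simp [h]⟩
  trans := by
    rintro f g k ⟨σ, hg⟩ ⟨τ, hk⟩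
    exact ⟨σ * τ, by rw [hk, hg, comp_assoc, Equiv.Perm.coe_mul]⟩

lemma mk_eq_mk_iff_permRel {f g : OrdConfig n X} :
    Quot.mk (permRel n X) f = Quot.mk _ g ↔ permRel n X f g := by
  rw [Quot.eq, (equivalence_permRel n X).eqvGen_iff]

lemma mk_eq_mk_iff_range_subset {f g : OrdConfig n X} :
    Quot.mk (permRel n X) f = Quot.mk _ g ↔ range g.1 ⊆ range f.1 := by
  rw [mk_eq_mk_iff_permRel]
  refine ⟨?_, exists_perm_eq_comp g.2.1⟩
  rintro ⟨σ, hσ⟩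
  exact hσ ▸ range_comp_subset_range σ f.1

lemma mk_eq_mk_iff_range_eq {f g : OrdConfig n X} :
    Quot.mk (permRel n X) f = Quot.mk _ g ↔ range f.1 = range g.1 :=
  ⟨fun h => (mk_eq_mk_iff_range_subset.mp h.symm).antisymm (mk_eq_mk_iff_range_subset.mp h),
    fun h => mk_eq_mk_iff_range_subset.mpr h.ge⟩

lemma isOpenQuotientMap_mk (n : ℕ) (X : Set ℂ) : IsOpenQuotientMap (Quot.mk (permRel n X)) := by
  refine ⟨Quot.mk_surjective, continuous_quot_mk, fun U hU => ?_⟩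
  let relabel (σ : Equiv.Perm (Fin n)) (f : OrdConfig n X) : OrdConfig n X :=
    ⟨f.1 ∘ σ, f.2.1.comp σ.injective, fun i => f.2.2 (σ i)⟩
  have continuous_relabel (σ) : Continuous (relabel σ) :=
    ((Pi.continuous_precomp σ).comp continuous_subtype_val).subtype_mk _
  have saturation : Quot.mk (permRel n X) ⁻¹' (Quot.mk _ '' U) = ⋃ σ, relabel σ ⁻¹' U := by
    ext f
    simp only [mem_preimage, mem_image, mem_iUnion]
    constructor
    · rintro ⟨g, hgU, hgf⟩
      obtain ⟨σ, hσ⟩ := mk_eq_mk_iff_permRel.mp hgf.symm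
      exact ⟨σ, (Subtype.ext hσ : g = relabel σ f) ▸ hgU⟩
    · rintro ⟨σ, hσ⟩
      exact ⟨relabel σ f, hσ, (Quot.sound ⟨σ, rfl⟩).symm⟩
  rw [← isQuotientMap_quot_mk.isOpen_preimage, saturation]
  exact isOpen_iUnion fun σ => hU.preimage (continuous_relabel σ)

end UConfig

open UConfig

/-- The root of unity `e^{2πi/p}` by which the configurations in `zetaFixed p n` are rotated. -/
noncomputable def zeta (p : ℕ) : ℂ := Complex.exp (2 * Real.pi * Complex.I / p)

lemma isPrimitiveRoot_zeta (p : ℕ) [NeZero p] : IsPrimitiveRoot (zeta p) p :=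
  Complex.isPrimitiveRoot_exp p (NeZero.ne p)

lemma mk_mem_zetaFixed_iff {p n : ℕ} {f : OrdConfig n univ} :
    Quot.mk _ f ∈ zetaFixed p n ↔ MapsTo (zeta p * ·) (range f.1) (range f.1) := by
  constructor
  · rintro ⟨g, σ, hgf, hσ⟩
    rw [← mk_eq_mk_iff_range_eq.mp hgf]
    rintro _ ⟨i, rfl⟩
    exact ⟨σ i, hσ i⟩
  · intro h
    have hinj : Injective fun i => zeta p * f.1 i :=
      (mul_right_injective₀ (Complex.exp_ne_zero _)).comp f.2.1
    obtain ⟨σ, hσ⟩ := exists_perm_eq_comp hinj (range_subset_iff.mpr fun i => h (mem_range_self i))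
    exact ⟨f, σ, rfl, fun i => (congrFun hσ i).symm⟩

/-- The `q`-tuples of complex numbers whose `p`-th powers form an ordered configuration in
`ℂ ∖ {0}`. For `p ≠ 0` these are the tuples of representatives of `q` distinct free orbits of the
group of `p`-th roots of unity. -/
def orbitReps (p q : ℕ) : Set (Fin q → ℂ) :=
  (· ^ p) ⁻¹' {f | Injective f ∧ ∀ i, f i ∈ {z : ℂ | z ≠ 0}}

section OrbitReps

variable {p q : ℕ}

lemma isOpen_orbitReps (p q : ℕ) : IsOpen (orbitReps p q) := by
  have isOpen_nonzero : IsOpen {f : Fin q → ℂ | ∀ i, f i ∈ {z : ℂ | z ≠ 0}} := by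
    rw [ofPred_forall]
    exact isOpen_iInter_of_finite fun i => isOpen_ne.preimage (continuous_apply i)
  exact (isOpen_setOf_injective.inter isOpen_nonzero).preimage (continuous_pow p)

lemma exists_comp_mem_orbitReps (hp : 2 ≤ p) {f : Fin (p * q) → ℂ} (hf : Injective f) :
    ∃ s : Fin q → Fin (p * q), f ∘ s ∈ orbitReps p q := by
  classical
  have hcard : p * q ≤ (Finset.univ.image f).card := by
    rw [Finset.card_image_of_injective _ hf, Finset.card_univ, Fintype.card_fin]
  obtain ⟨g, hg, hginj⟩ :=
    exists_injective_comp_of_le_card_image (le_card_image_pow_erase_zero hp hcard)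
  simp only [Finset.mem_erase, Finset.mem_image, Finset.mem_univ, true_and] at hg
  obtain ⟨s, rfl⟩ := range_subset_range_iff_exists_comp.mp (range_subset_iff.mpr fun i => (hg i).2)
  exact ⟨s, hginj, fun i => pow_ne_zero p (hg i).1⟩

/-- The configuration of the `p`-th powers of a tuple of orbit representatives. -/
def powConfig (g : orbitReps p q) : UConfig q {z : ℂ | z ≠ 0} :=
  Quot.mk _ ⟨g.1 ^ p, g.2⟩

variable [NeZero p]

lemma isOpenQuotientMap_powConfig :
    IsOpenQuotientMap (powConfig : orbitReps p q → UConfig q {z : ℂ | z ≠ 0}) := by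
  have hpow : IsOpenQuotientMap fun g : Fin q → ℂ => g ^ p :=
    .piMap fun _ => Complex.isOpenQuotientMap_pow p
  exact (isOpenQuotientMap_mk q _).comp (hpow.restrictPreimage _)

/-- The union of the orbits of a tuple of representatives, as an ordered configuration. -/
noncomputable def orbitOrdConfig (g : orbitReps p q) : OrdConfig (p * q) univ :=
  ⟨orbitFamily (zeta p) p g.1 ∘ finProdFinEquiv.symm,
    (injective_orbitFamily (isPrimitiveRoot_zeta p) g.2.1 fun i =>
      ne_zero_pow (NeZero.ne p) (g.2.2 i)).comp finProdFinEquiv.symm.injective,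
    fun _ => mem_univ _⟩

lemma range_orbitOrdConfig_eq_range_orbitFamily (g : orbitReps p q) :
    range (orbitOrdConfig g).1 = range (orbitFamily (zeta p) p g.1) :=
  finProdFinEquiv.symm.surjective.range_comp (orbitFamily (zeta p) p g.1)

lemma range_orbitOrdConfig (g : orbitReps p q) :
    range (orbitOrdConfig g).1 = (· ^ p) ⁻¹' range (g.1 ^ p) := by
  rw [range_orbitOrdConfig_eq_range_orbitFamily, range_orbitFamily (isPrimitiveRoot_zeta p)]

lemma continuous_orbitOrdConfig :
    Continuous (orbitOrdConfig : orbitReps p q → OrdConfig (p * q) univ) := by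
  have hfamily : Continuous fun g : orbitReps p q => orbitFamily (zeta p) p g.1 :=
    (continuous_orbitFamily (zeta p) p).comp continuous_subtype_val
  exact ((Pi.continuous_precomp finProdFinEquiv.symm).comp hfamily).subtype_mk _

lemma mk_orbitOrdConfig_mem_zetaFixed (g : orbitReps p q) :
    Quot.mk _ (orbitOrdConfig g) ∈ zetaFixed p (p * q) := by
  rw [mk_mem_zetaFixed_iff, range_orbitOrdConfig]
  intro z hz
  rwa [mem_preimage, mul_pow, (isPrimitiveRoot_zeta p).pow_eq_one, one_mul]

/-- The union of the orbits of a tuple of representatives, as a fixed unordered configuration. -/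
noncomputable def orbitConfig (g : orbitReps p q) : zetaFixed p (p * q) :=
  ⟨Quot.mk _ (orbitOrdConfig g), mk_orbitOrdConfig_mem_zetaFixed g⟩

lemma orbitConfig_eq_iff_powConfig_eq (g g' : orbitReps p q) :
    orbitConfig g = orbitConfig g' ↔ powConfig g = powConfig g' := by
  have pow_surjective : Surjective fun z : ℂ => z ^ p :=
    (Complex.isOpenQuotientMap_pow p).surjective
  calc orbitConfig g = orbitConfig g'
      ↔ range (orbitOrdConfig g).1 = range (orbitOrdConfig g').1 := by
        rw [← mk_eq_mk_iff_range_eq, orbitConfig, orbitConfig, Subtype.mk_eq_mk]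
    _ ↔ range (g.1 ^ p) = range (g'.1 ^ p) := by
        rw [range_orbitOrdConfig, range_orbitOrdConfig, pow_surjective.preimage_injective.eq_iff]
    _ ↔ powConfig g = powConfig g' := by
        rw [powConfig, powConfig, mk_eq_mk_iff_range_eq]

lemma orbitConfig_eq_iff_exists_comp {f : OrdConfig (p * q) univ}
    (hf : Quot.mk _ f ∈ zetaFixed p (p * q)) (g : orbitReps p q) :
    orbitConfig g = ⟨Quot.mk _ f, hf⟩ ↔ ∃ s, g.1 = f.1 ∘ s := by
  rw [← range_subset_range_iff_exists_comp, eq_comm, orbitConfig, Subtype.mk_eq_mk]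
  constructor
  · intro h
    rw [mk_eq_mk_iff_range_eq.mp h, range_orbitOrdConfig]
    rintro _ ⟨i, rfl⟩
    exact mem_range_self i
  · intro h
    rw [mk_eq_mk_iff_range_subset, range_orbitOrdConfig_eq_range_orbitFamily]
    exact range_orbitFamily_subset (mk_mem_zetaFixed_iff.mp hf) h

lemma surjective_orbitConfig (hp : 2 ≤ p) :
    Surjective (orbitConfig : orbitReps p q → zetaFixed p (p * q)) := by
  rintro ⟨⟨f⟩, hf⟩
  obtain ⟨s, hs⟩ := exists_comp_mem_orbitReps hp f.2.1
  exact ⟨⟨f.1 ∘ s, hs⟩, (orbitConfig_eq_iff_exists_comp hf _).mpr ⟨s, rfl⟩⟩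

lemma isOpenMap_orbitConfig :
    IsOpenMap (orbitConfig : orbitReps p q → zetaFixed p (p * q)) := by
  intro U hU
  let mkFixed := (zetaFixed p (p * q)).restrictPreimage (Quot.mk (permRel (p * q) univ))
  have isQuotientMap_mkFixed : IsQuotientMap mkFixed :=
    ((isOpenQuotientMap_mk _ _).restrictPreimage _).isQuotientMap
  have saturation : mkFixed ⁻¹' (orbitConfig '' U) =
      ⋃ s : Fin q → Fin (p * q), (fun f => f.1.1 ∘ s) ⁻¹' (Subtype.val '' U) := by
    ext f
    have fibre (g : orbitReps p q) : orbitConfig g = mkFixed f ↔ ∃ s, g.1 = f.1.1 ∘ s :=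
      orbitConfig_eq_iff_exists_comp f.2 g
    simp only [mem_preimage, mem_image, mem_iUnion, fibre]
    grind
  rw [← isQuotientMap_mkFixed.isOpen_preimage, saturation]
  exact isOpen_iUnion fun s =>
    ((isOpen_orbitReps p q).isOpenMap_subtype_val U hU).preimage
      ((Pi.continuous_precomp s).comp (continuous_subtype_val.comp continuous_subtype_val))

lemma isOpenQuotientMap_orbitConfig (hp : 2 ≤ p) :
    IsOpenQuotientMap (orbitConfig : orbitReps p q → zetaFixed p (p * q)) where
  surjective := surjective_orbitConfig hp
  continuous := (continuous_quot_mk.comp continuous_orbitOrdConfig).subtype_mk _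
  isOpenMap := isOpenMap_orbitConfig

end OrbitReps

theorem zetaFixed_homeo_config_punctured_general (p q : ℕ) (hp : 2 ≤ p) :
    Nonempty (↥(zetaFixed p (p * q)) ≃ₜ UConfig q {z : ℂ | z ≠ 0}) := by
  have : NeZero p := ⟨by lia⟩
  exact nonempty_homeomorph_of_isQuotientMap (isOpenQuotientMap_orbitConfig hp).isQuotientMap
    isOpenQuotientMap_powConfig.isQuotientMap orbitConfig_eq_iff_powConfig_eq

/-- For a prime `p`, `q ≥ 1` and `n = pq`, the fixed-point subspace `C_n(ℂ)^{ℤ/p}` (with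
the subspace topology) is homeomorphic to the unordered configuration space
`C_q(ℂ∖{0})` of `q` points in the punctured plane. -/
theorem zetaFixed_homeo_config_punctured (p q : ℕ) (hp : p.Prime) (hq : 1 ≤ q) :
    Nonempty (↥(zetaFixed p (p * q)) ≃ₜ UConfig q {z : ℂ | z ≠ 0}) :=
  zetaFixed_homeo_config_punctured_general p q hp.two_le
end
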